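/- arXiv:2007.07392 — 9 statements merged into one kernel-verified Lean document; each statement's English description precedes it below -/
import Mathlib

section
/- Let K be a number field of degree n, let M be a full module in K, and let ε ∈ 𝒰_M⁺ be nontorsion (i.e., ε is not a root of unity). Fix a nonzero β ∈ M and a ℤ-basis W = {w₁, …, w_n} of M, and define the coordinate sequences x_i : ℕ → ℤ by β·ε^k = x₁(k)w₁ + ⋯ + x_n(k)w_n. If the minimal polynomial of ε over ℚ is X^d − s₁X^{d−1} − ⋯ − s_d, then each x_i satisfies the recurrence x_i(k+d) = s₁·x_i(k+d−1) + ⋯ + s_d·x_i(k) for all k ≥ 0. Furthermore, if [ℚ(ε) : ℚ] = [K : ℚ], then this recurrence is of minimal order, i.e., the minimal polynomial of each sequence x_i equals the minimal polynomial of ε. -/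
open Polynomial IntermediateField

/-!
Let `S` be the shift of sequences and, for a linear form `φ` on `K`, let `L z` be the sequence
`k ↦ φ (z * ε ^ k)`. Then `S (L z) = L (z * ε)`, so `p(S)` sends `L z` to `L (z * p(ε))`, and a
sequence satisfies a linear recurrence exactly when the characteristic polynomial, evaluated
at `S`, kills it. Taking `p` to be the minimal polynomial of `ε` gives the recurrence. If `ε`
generates `K` and `φ ≠ 0`, then `L` is injective: `L z = 0` with `z ≠ 0` would make `φ` vanish on
`z * F[ε] = K`. Hence `p(S)` kills `L β` only if `p(ε) = 0`. The coordinate sequences of `β * ε ^ k`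
are the `L β` for `φ` a coordinate form.
-/

section Shift

/-- The shift `(u k) ↦ (u (k + 1))` on sequences. The solution space of a linear
recurrence is the kernel of its characteristic polynomial evaluated at this operator. -/
def sequenceShift (R : Type*) [CommSemiring R] : Module.End R (ℕ → R) :=
  LinearMap.funLeft R R Nat.succ

theorem sequenceShift_pow_apply {R : Type*} [CommSemiring R] (m : ℕ) (u : ℕ → R) (k : ℕ) :
    (sequenceShift R ^ m) u k = u (k + m) := by
  induction m generalizing k with
  | zero => rfl
  | succ m ih =>
    calc (sequenceShift R ^ (m + 1)) u k = (sequenceShift R ^ m) u (k + 1) := by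
          rw [pow_succ', Module.End.mul_apply]; rfl
      _ = u (k + (m + 1)) := by rw [ih, add_assoc, add_comm 1]

theorem isSolution_iff_aeval_sequenceShift_charPoly_eq_zero {R : Type*} [CommRing R]
    (E : LinearRecurrence R) (u : ℕ → R) :
    E.IsSolution u ↔ aeval (sequenceShift R) E.charPoly u = 0 := by
  simp [LinearRecurrence.IsSolution, LinearRecurrence.charPoly, funext_iff, sub_eq_zero,
    aeval_monomial, sequenceShift_pow_apply]

end Shift

section OrbitSequence

variable {R A : Type*} [CommSemiring R] [Semiring A] [Algebra R A]

/-- The sequence `k ↦ φ (z * ε ^ k)`, as a linear function of `z`. When `φ` is a coordinate form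
of a basis, this is a coordinate sequence of `z * ε ^ k`. -/
def orbitSequence (φ : A →ₗ[R] R) (ε : A) : A →ₗ[R] ℕ → R :=
  LinearMap.pi fun k => φ ∘ₗ LinearMap.mulRight R (ε ^ k)

theorem orbitSequence_apply (φ : A →ₗ[R] R) (ε z : A) (k : ℕ) :
    orbitSequence φ ε z k = φ (z * ε ^ k) := rfl

theorem sequenceShift_pow_orbitSequence (φ : A →ₗ[R] R) (ε z : A) (m : ℕ) :
    (sequenceShift R ^ m) (orbitSequence φ ε z) = orbitSequence φ ε (z * ε ^ m) := by
  ext k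
  rw [sequenceShift_pow_apply, orbitSequence_apply, orbitSequence_apply, mul_assoc, ← pow_add,
    add_comm]

theorem aeval_sequenceShift_orbitSequence (φ : A →ₗ[R] R) (ε z : A) (p : R[X]) :
    aeval (sequenceShift R) p (orbitSequence φ ε z) = orbitSequence φ ε (z * aeval ε p) := by
  induction p using Polynomial.induction_on' with
  | add p q hp hq => rw [map_add, LinearMap.add_apply, hp, hq, map_add, mul_add, map_add]
  | monomial m a =>
    simp only [aeval_monomial, ← Algebra.smul_def, LinearMap.smul_apply,
      sequenceShift_pow_orbitSequence, mul_smul_comm, map_smul]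

end OrbitSequence

theorem orbitSequence_injective {R K : Type*} [CommRing R] [DivisionRing K] [Algebra R K]
    {φ : K →ₗ[R] R} (hφ : φ ≠ 0) {ε : K} (hε : Algebra.adjoin R {ε} = ⊤) :
    Function.Injective (orbitSequence φ ε) := by
  rw [injective_iff_map_eq_zero]
  intro z hz
  by_contra hz0
  refine hφ (LinearMap.ext fun y => ?_)
  obtain ⟨q, hq⟩ : ∃ q : R[X], aeval ε q = z⁻¹ * y := by
    rw [← AlgHom.mem_range, ← Algebra.adjoin_singleton_eq_range_aeval, hε]
    exact Algebra.mem_top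
  calc φ y = orbitSequence φ ε (z * aeval ε q) 0 := by
        rw [orbitSequence_apply, hq, mul_inv_cancel_left₀ hz0, pow_zero, mul_one]
    _ = aeval (sequenceShift R) q (orbitSequence φ ε z) 0 := by
        rw [aeval_sequenceShift_orbitSequence]
    _ = 0 := by rw [hz, map_zero, Pi.zero_apply]

section Minpoly

variable {F K : Type*} [Field F] [Field K] [Algebra F K] {ε : K}

theorem isSolution_orbitSequence_of_minpoly_dvd (φ : K →ₗ[F] F) (z : K) {E : LinearRecurrence F}
    (hE : minpoly F ε ∣ E.charPoly) : E.IsSolution (orbitSequence φ ε z) := by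
  rw [isSolution_iff_aeval_sequenceShift_charPoly_eq_zero, aeval_sequenceShift_orbitSequence,
    minpoly.dvd_iff.mp hE, mul_zero, map_zero]

theorem isSolution_orbitSequence_iff_minpoly_dvd {φ : K →ₗ[F] F} (hφ : φ ≠ 0)
    (hε : Algebra.adjoin F {ε} = ⊤) {z : K} (hz : z ≠ 0) (E : LinearRecurrence F) :
    E.IsSolution (orbitSequence φ ε z) ↔ minpoly F ε ∣ E.charPoly := by
  refine ⟨fun h => ?_, isSolution_orbitSequence_of_minpoly_dvd φ z⟩
  rw [isSolution_iff_aeval_sequenceShift_charPoly_eq_zero, aeval_sequenceShift_orbitSequence,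
    map_eq_zero_iff _ (orbitSequence_injective hφ hε)] at h
  exact minpoly.dvd F ε ((mul_eq_zero_iff_left hz).mp h)

theorem order_le_of_isSolution_orbitSequence {φ : K →ₗ[F] F} (hφ : φ ≠ 0)
    (hε : Algebra.adjoin F {ε} = ⊤) {z : K} (hz : z ≠ 0) {E E' : LinearRecurrence F}
    (hE : minpoly F ε = E.charPoly) (hE' : E'.IsSolution (orbitSequence φ ε z)) :
    E.order ≤ E'.order := by
  have hdvd : E.charPoly ∣ E'.charPoly :=
    hE ▸ (isSolution_orbitSequence_iff_minpoly_dvd hφ hε hz E').mp hE'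
  simpa using degree_le_of_dvd hdvd E'.charPoly_monic.ne_zero

end Minpoly

section DescendingRecurrence

theorem sum_fin_rev_eq_sum_sub {M : Type*} [AddCommMonoid M] {d : ℕ} (f : Fin d → ℕ → M) :
    ∑ i : Fin d, f i.rev i = ∑ j : Fin d, f j (d - 1 - (j : ℕ)) :=
  Fintype.sum_equiv Fin.revPerm _ _ fun i => by
    rw [Fin.revPerm_apply, Fin.val_rev, show d - 1 - (d - (i + 1)) = (i : ℕ) by lia]

/-- The recurrence `u (k + d) = s₁ u (k + d - 1) + ⋯ + s_d u k`, with coefficients listed from the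
most recent term backwards; `LinearRecurrence.coeffs` lists them in the opposite order. -/
def descendingRecurrence {R : Type*} [CommSemiring R] {d : ℕ} (s : Fin d → R) :
    LinearRecurrence R :=
  ⟨d, s ∘ Fin.rev⟩

theorem descendingRecurrence_isSolution_iff {R : Type*} [CommSemiring R] {d : ℕ} (s : Fin d → R)
    (u : ℕ → R) :
    (descendingRecurrence s).IsSolution u ↔
      ∀ k, u (k + d) = ∑ j : Fin d, s j * u (k + (d - 1 - (j : ℕ))) := by
  refine forall_congr' fun k => ?_
  rw [← sum_fin_rev_eq_sum_sub fun j e => s j * u (k + e)]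
  rfl

theorem descendingRecurrence_charPoly {R : Type*} [CommRing R] {d : ℕ} (s : Fin d → R) :
    (descendingRecurrence s).charPoly =
      X ^ d - ∑ j : Fin d, C (s j) * X ^ (d - 1 - (j : ℕ)) := by
  simp only [C_mul_X_pow_eq_monomial]
  rw [X_pow_eq_monomial, ← sum_fin_rev_eq_sum_sub fun j e => monomial e (s j)]
  rfl

end DescendingRecurrence

theorem coordinate_sequences_recurrence_general {F K ι : Type*} [Field F] [Field K] [Algebra F K]
    [Fintype ι] (W : Module.Basis ι F K) {ε β : K} (hβ : β ≠ 0) (x : ι → ℕ → F)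
    (hx : ∀ k, β * ε ^ k = ∑ i, x i k • W i) {d : ℕ} {s : Fin d → F}
    (hmin : minpoly F ε = X ^ d - ∑ j : Fin d, C (s j) * X ^ (d - 1 - (j : ℕ))) :
    (∀ i k, x i (k + d) = ∑ j : Fin d, s j * x i (k + (d - 1 - (j : ℕ)))) ∧
    (Module.finrank F F⟮ε⟯ = Module.finrank F K →
      ∀ i m, ∀ r : Fin m → F,
        (∀ k, x i (k + m) = ∑ j : Fin m, r j * x i (k + (m - 1 - (j : ℕ)))) → d ≤ m) := by
  have x_eq (i : ι) : x i = orbitSequence (W.coord i) ε β := by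
    ext k
    rw [orbitSequence_apply, hx, W.coord_apply, W.repr_sum_self]
  rw [← descendingRecurrence_charPoly] at hmin
  simp only [← descendingRecurrence_isSolution_iff, x_eq]
  refine ⟨fun i => isSolution_orbitSequence_of_minpoly_dvd _ β hmin.dvd, fun hfin i m r hr => ?_⟩
  have : FiniteDimensional F K := W.finiteDimensional_of_finite
  have adjoin_eq_top : Algebra.adjoin F {ε} = ⊤ :=
    adjoin_eq_top_iff.mp <| eq_of_le_of_finrank_eq le_top (hfin.trans finrank_top'.symm)
  have coord_ne_zero : W.coord i ≠ 0 := fun h => by simpa using LinearMap.congr_fun h (W i)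
  exact order_le_of_isSolution_orbitSequence coord_ne_zero adjoin_eq_top hβ hmin hr

/-- Corollary 1. Coordinate sequences of `β·ε^k` with respect to a
ℤ-basis `W` of a full module `M` in a number field `K`, where `ε ∈ 𝒰_M⁺` is
nontorsion, satisfy the linear recurrence whose characteristic polynomial is the
minimal polynomial of `ε`; if moreover `[ℚ(ε) : ℚ] = [K : ℚ]`, this recurrence
has minimal order. -/
theorem coordinate_sequences_recurrence
    (K : Type*) [Field K] [NumberField K]
    (n : ℕ) (hn : n = Module.finrank ℚ K)
    (W : Fin n → K) (hW : LinearIndependent ℚ W)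
    (M : Submodule ℤ K) (hM : M = Submodule.span ℤ (Set.range W))
    (ε : K) (hεM : ∀ z ∈ M, ε * z ∈ M)
    (hεnorm : Algebra.norm ℚ ε = 1)
    (hεnt : ∀ j : ℕ, 0 < j → ε ^ j ≠ 1)
    (β : K) (hβM : β ∈ M) (hβ : β ≠ 0)
    (x : Fin n → ℕ → ℤ)
    (hx : ∀ k : ℕ, β * ε ^ k = ∑ i : Fin n, (x i k : K) * W i)
    (d : ℕ) (s : Fin d → ℚ)
    (hmin : minpoly ℚ ε = X ^ d - ∑ j : Fin d, C (s j) * X ^ (d - 1 - (j : ℕ))) :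
    (∀ i : Fin n, ∀ k : ℕ,
      ((x i (k + d) : ℚ)) = ∑ j : Fin d, s j * (x i (k + (d - 1 - (j : ℕ))) : ℚ)) ∧
    (Module.finrank ℚ (ℚ⟮ε⟯ : IntermediateField ℚ K) = Module.finrank ℚ K →
      ∀ i : Fin n, ∀ m : ℕ, 1 ≤ m → ∀ r : Fin m → ℚ,
        (∀ k : ℕ, ((x i (k + m) : ℚ)) =
          ∑ j : Fin m, r j * (x i (k + (m - 1 - (j : ℕ))) : ℚ)) →
        d ≤ m) := by
  obtain ⟨recurrence, minimal⟩ := coordinate_sequences_recurrence_general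
    (.mk hW (hW.span_eq_top_of_card_eq_finrank' (by simpa using hn)).ge) hβ (fun i k => (x i k : ℚ))
    (by simpa [Algebra.smul_def] using hx) hmin
  exact ⟨recurrence, fun hfin i m _ => minimal hfin i m⟩
end

section
/- Let K be a real quadratic field and M a full module in K. Let ε ∈ 𝒰_M⁺ with ε ≠ ±1 (so ε is nontorsion), and fix a nonzero β ∈ M. Then there exists a ℤ-basis W = {w₁, w₂} of M such that, writing β·ε^k = x₁(k)w₁ + x₂(k)w₂ with x₁(k), x₂(k) ∈ ℤ, the sequence x₁ is a linear divisibility sequence. -/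
/-!
Multiplication by `ε` is an endomorphism `f` of the free module `M` of rank two. Choose a basis
`w₀, w₁` of `M` with `β = g • w₁` (Smith normal form of the submodule spanned by `β`), and let `d`
be the `w₀`-coordinate of `f ^ n w₁`. Then `w₁` is an eigenvector of `f ^ n` modulo `d • M`, hence
also of every power `f ^ (n * k)`, which says that `d` divides the `w₀`-coordinate of
`f ^ (n * k) w₁`. Scaling by `g` gives the divisibility for `β`.
-/

open Module

section CommRing

variable {R M ι : Type*} [CommRing R] [AddCommGroup M] [Module R M]

theorem pow_apply_sub_pow_smul_mem {f : End R M} {N : Submodule R M} (hN : N ∈ f.invtSubmodule)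
    {x : M} {c : R} (hx : f x - c • x ∈ N) (k : ℕ) : (f ^ k) x - c ^ k • x ∈ N := by
  induction k with
  | zero => simp
  | succ k ih =>
    have split : (f ^ (k + 1)) x - c ^ (k + 1) • x =
        f ((f ^ k) x - c ^ k • x) + c ^ k • (f x - c • x) := by
      rw [pow_succ' f, End.mul_apply, map_sub, map_smul, smul_sub, smul_smul, ← pow_succ]
      abel
    rw [split]
    exact N.add_mem (hN ih) (N.smul_mem _ hx)

theorem ideal_smul_top_mem_invtSubmodule (I : Ideal R) (f : End R M) :
    I • (⊤ : Submodule R M) ∈ f.invtSubmodule := by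
  rw [End.mem_invtSubmodule_iff_map_le, Submodule.map_smul'']
  exact smul_mono_right I le_top

theorem mem_ideal_smul_top_iff_repr_mem (b : Basis ι R M) (I : Ideal R) (x : M) :
    x ∈ I • (⊤ : Submodule R M) ↔ ∀ j, b.repr x j ∈ I := by
  rw [← b.span_eq, Submodule.mem_ideal_smul_span_iff_exists_sum]
  constructor
  · rintro ⟨a, ha, rfl⟩ j
    have repr_sum : b.repr (a.sum fun i c => c • b i) = a := b.repr_linearCombination a
    rw [repr_sum]
    exact ha j
  · exact fun hx => ⟨b.repr x, hx, b.linearCombination_repr x⟩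

theorem exists_sub_smul_mem_ideal_smul_top_iff (b : Basis ι R M) (I : Ideal R) (i : ι) (x : M) :
    (∃ c : R, x - c • b i ∈ I • (⊤ : Submodule R M)) ↔ ∀ j ≠ i, b.repr x j ∈ I := by
  simp only [mem_ideal_smul_top_iff_repr_mem b, map_sub, map_smul, Basis.repr_self,
    Finsupp.sub_apply, Finsupp.smul_apply, smul_eq_mul]
  constructor
  · rintro ⟨c, hc⟩ j hj
    simpa [Finsupp.single_eq_of_ne hj] using hc j
  · refine fun hx => ⟨b.repr x i, fun j => ?_⟩
    obtain rfl | hj := eq_or_ne j i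
    · simp
    · simpa [Finsupp.single_eq_of_ne hj] using hx j hj

theorem repr_pow_apply_self_mem (b : Basis ι R M) {I : Ideal R} {f : End R M} {i : ι}
    (hf : ∀ j ≠ i, b.repr (f (b i)) j ∈ I) (k : ℕ) :
    ∀ j ≠ i, b.repr ((f ^ k) (b i)) j ∈ I := by
  obtain ⟨c, hc⟩ := (exists_sub_smul_mem_ideal_smul_top_iff b I i _).2 hf
  exact (exists_sub_smul_mem_ideal_smul_top_iff b I i _).1
    ⟨c ^ k, pow_apply_sub_pow_smul_mem (ideal_smul_top_mem_invtSubmodule I f) hc k⟩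

theorem repr_apply_self_dvd_repr_pow_apply_self (b : Basis (Fin 2) R M) (f : End R M) (k : ℕ) :
    b.repr (f (b 1)) 0 ∣ b.repr ((f ^ k) (b 1)) 0 := by
  rw [← Ideal.mem_span_singleton]
  refine repr_pow_apply_self_mem b (fun j hj => ?_) k 0 zero_ne_one
  obtain rfl : j = 0 := by omega
  exact Ideal.mem_span_singleton_self _

end CommRing

section PrincipalIdealDomain

variable {R M : Type*} [CommRing R] [IsDomain R] [IsPrincipalIdealRing R]
  [AddCommGroup M] [Module R M]

theorem exists_basis_eq_smul {ι : Type*} [Finite ι] (b : Basis ι R M) (i : ι) (x : M) :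
    ∃ (w : Basis ι R M) (g : R), x = g • w i := by
  classical
  obtain rfl | hx := eq_or_ne x 0
  · exact ⟨b, 0, (zero_smul R _).symm⟩
  obtain ⟨n, snf⟩ := (R ∙ x).smithNormalForm b
  have : IsTorsionFree R M := b.isTorsionFree
  obtain rfl : n = 1 := by
    simpa [finrank_eq_card_basis snf.bN] using
      (LinearEquiv.toSpanNonzeroSingleton R M x hx).finrank_eq.symm
  let x' : R ∙ x := ⟨x, Submodule.mem_span_singleton_self x⟩
  refine ⟨snf.bM.reindex (Equiv.swap (snf.f 0) i), snf.bN.repr x' 0 * snf.a 0, ?_⟩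
  calc
    x = ((snf.bN.repr x' 0 • snf.bN 0 : R ∙ x) : M) := by
      rw [← Fin.sum_univ_one fun i => snf.bN.repr x' i • snf.bN i, snf.bN.sum_repr]
    _ = _ := by simp [snf.snf, mul_smul]

theorem exists_basis_repr_pow_apply_dvd (b : Basis (Fin 2) R M) (f : End R M) (x : M) :
    ∃ w : Basis (Fin 2) R M,
      ∀ n m : ℕ, n ∣ m → w.repr ((f ^ n) x) 0 ∣ w.repr ((f ^ m) x) 0 := by
  obtain ⟨w, g, rfl⟩ := exists_basis_eq_smul b 1 x
  refine ⟨w, ?_⟩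
  rintro n _ ⟨k, rfl⟩
  simp only [map_smul, Finsupp.smul_apply, smul_eq_mul, pow_mul]
  exact mul_dvd_mul_left g (repr_apply_self_dvd_repr_pow_apply_self w (f ^ n) k)

end PrincipalIdealDomain

theorem real_quadratic_coordinate_LDS_general
    {R A : Type*} [CommRing R] [IsDomain R] [IsPrincipalIdealRing R] [CommRing A] [Algebra R A]
    {M : Submodule R A} (b : Basis (Fin 2) R M) {ε : A} (hεM : ∀ z ∈ M, ε * z ∈ M)
    {β : A} (hβM : β ∈ M) :
    ∃ w : Fin 2 → A,
      Submodule.span R (Set.range w) = M ∧ LinearIndependent R w ∧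
      ∃ x : Fin 2 → ℕ → R,
        (∀ k : ℕ, β * ε ^ k = ∑ i : Fin 2, x i k • w i) ∧
        (∀ n m : ℕ, n ∣ m → x 0 n ∣ x 0 m) := by
  let f : End R M := (LinearMap.mulLeft R ε).restrict hεM
  have f_pow_apply (k : ℕ) : ((f ^ k) ⟨β, hβM⟩ : A) = β * ε ^ k := by
    rw [End.pow_restrict k hεM, LinearMap.coe_restrict_apply, LinearMap.pow_mulLeft,
      LinearMap.mulLeft_apply, mul_comm]
  obtain ⟨w, hw⟩ := exists_basis_repr_pow_apply_dvd b f ⟨β, hβM⟩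
  refine ⟨fun i => w i, ?_, w.linearIndependent.map' _ (Submodule.ker_subtype _),
    fun i k => w.repr ((f ^ k) ⟨β, hβM⟩) i, fun k => ?_, hw⟩
  · calc
      Submodule.span R (Set.range fun i => (w i : A))
        = (Submodule.span R (Set.range w)).map M.subtype := by
          rw [Submodule.map_span, ← Set.range_comp]; rfl
      _ = M := by rw [w.span_eq, M.map_subtype_top]
  · rw [← f_pow_apply]
    simpa only [Submodule.coe_sum, Submodule.coe_smul] using
      congrArg Subtype.val (w.sum_repr ((f ^ k) ⟨β, hβM⟩)).symm

/-- Proposition 3. For a full module `M` in a real quadratic field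
`K`, a nontorsion `ε ∈ 𝒰_M⁺` (norm one, `ε ≠ ±1`), and a nonzero `β ∈ M`, there
is a ℤ-basis `{w₁, w₂}` of `M` such that, writing
`β·ε^k = x₁(k)w₁ + x₂(k)w₂`, the sequence `x₁` is a linear divisibility
sequence. -/
theorem real_quadratic_coordinate_LDS
    (K : Type*) [Field K] [NumberField K]
    (hK2 : Module.finrank ℚ K = 2) (φ : K →+* ℝ)
    (t : Fin 2 → K) (ht : LinearIndependent ℚ t)
    (M : Submodule ℤ K) (hM : M = Submodule.span ℤ (Set.range t))
    (ε : K) (hεM : ∀ z ∈ M, ε * z ∈ M)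
    (hεnorm : Algebra.norm ℚ ε = 1) (hε1 : ε ≠ 1) (hε2 : ε ≠ -1)
    (β : K) (hβM : β ∈ M) (hβ : β ≠ 0) :
    ∃ w : Fin 2 → K,
      Submodule.span ℤ (Set.range w) = M ∧ LinearIndependent ℤ w ∧
      ∃ x : Fin 2 → ℕ → ℤ,
        (∀ k : ℕ, β * ε ^ k = ∑ i : Fin 2, (x i k : K) * w i) ∧
        (∀ n m : ℕ, 0 < n → 0 < m → n ∣ m → x 0 n ∣ x 0 m) := by
  subst hM
  obtain ⟨w, hspan, hind, x, hx, hdvd⟩ :=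
    real_quadratic_coordinate_LDS_general (Basis.span (ht.restrict_scalars' ℤ)) hεM hβM
  exact ⟨w, hspan, hind, x, by simpa only [zsmul_eq_mul] using hx, fun n m _ _ => hdvd n m⟩
end

section
/- Let a and T be nonzero integers, and let x : ℕ → ℤ be the sequence determined by the initial conditions x(0) = 0, x(1) = a, x(2) = a, x(3) = a·(T+1) and the recurrence x(k+4) = T·x(k+2) − x(k) for all k ≥ 0. Then x is a linear divisibility sequence: for all positive integers n and m, n ∣ m implies x(n) ∣ x(m). -/
/-!
Up to the factor `a`, the sequence is the Lehmer sequence with parameters `(T + 2, 1)`. If `α`, `β`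
are the roots of `z² - √R z + Q`, the Lehmer number `u n` is `(αⁿ - βⁿ) / (α - β)` for odd `n` and
`(αⁿ - βⁿ) / (α² - β²)` for even `n`: the Lucas sequence of `(√R, Q)` with the factor `√R` removed
from its even terms. The Lucas addition formula `U (m + n + 1) = U (m + 1) U (n + 1) - Q U m U n`
thus holds for `u` once each product is multiplied by `1` or `R` according to parities, and it shows
that `u n` divides `u (n * k + n)` whenever it divides `u (n * k)`.
-/

section Lehmer

variable {A : Type*} [CommRing A]

/-- The coefficient of `u (n + 1)` in the recurrence for the Lehmer number `u (n + 2)`; it replaces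
the coefficient `√R` of the corresponding Lucas sequence. -/
def lehmerCoeff (R : A) (n : ℕ) : A := if Even n then 1 else R

/-- The Lehmer sequence with parameters `R` and `Q`, over any commutative ring. The recurrence with
parity-dependent coefficients avoids adjoining `√R`. -/
def lehmerSeq (R Q : A) : ℕ → A
  | 0 => 0
  | 1 => 1
  | n + 2 => lehmerCoeff R n * lehmerSeq R Q (n + 1) - Q * lehmerSeq R Q n

/-- The factor by which the product of the `m`-th and `n`-th Lehmer numbers enters the addition
formula. Each even index stands for a factor `√R` of the Lucas sequence; if exactly one of `m`, `n`
is even, that factor cancels against the one of the left-hand side. -/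
def lehmerWeight (R : A) (m n : ℕ) : A := if Even m ∧ Even n then R else 1

theorem lehmerCoeff_add_two (R : A) (n : ℕ) : lehmerCoeff R (n + 2) = lehmerCoeff R n := by
  simp [lehmerCoeff, Nat.even_add]

theorem lehmerCoeff_mul_lehmerCoeff_add_one (R : A) (n : ℕ) :
    lehmerCoeff R n * lehmerCoeff R (n + 1) = R := by
  by_cases hn : Even n <;> simp [lehmerCoeff, Nat.even_add_one, hn]

theorem lehmerWeight_add_two_left (R : A) (m n : ℕ) :
    lehmerWeight R (m + 2) n = lehmerWeight R m n := by
  simp [lehmerWeight, Nat.even_add]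

theorem lehmerCoeff_mul_lehmerWeight (R : A) (m n : ℕ) :
    lehmerCoeff R (m + n + 1) * lehmerWeight R (m + 1) n =
      lehmerCoeff R m * lehmerWeight R m n := by
  by_cases hm : Even m <;> by_cases hn : Even n <;>
    simp [lehmerCoeff, lehmerWeight, Nat.even_add, hm, hn]

variable (R Q : A)

theorem lehmerSeq_zero : lehmerSeq R Q 0 = 0 := rfl

theorem lehmerSeq_one : lehmerSeq R Q 1 = 1 := rfl

theorem lehmerSeq_add_two (n : ℕ) :
    lehmerSeq R Q (n + 2) = lehmerCoeff R n * lehmerSeq R Q (n + 1) - Q * lehmerSeq R Q n := rfl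

theorem lehmerSeq_two : lehmerSeq R Q 2 = 1 := by
  simp [lehmerSeq, lehmerCoeff]

theorem lehmerSeq_three : lehmerSeq R Q 3 = R - Q := by
  simp [lehmerSeq, lehmerCoeff]

theorem lehmerSeq_add_four (n : ℕ) :
    lehmerSeq R Q (n + 4) = (R - 2 * Q) * lehmerSeq R Q (n + 2) - Q ^ 2 * lehmerSeq R Q n := by
  have h₂ := lehmerSeq_add_two R Q n
  have h₃ := lehmerSeq_add_two R Q (n + 1)
  have h₄ := lehmerSeq_add_two R Q (n + 2)
  rw [lehmerCoeff_add_two] at h₄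
  linear_combination h₄ + lehmerCoeff R n * h₃ + Q * h₂ +
    lehmerSeq R Q (n + 2) * lehmerCoeff_mul_lehmerCoeff_add_one R n

theorem lehmerSeq_add_add_one (m n : ℕ) :
    lehmerSeq R Q (m + n + 1) =
      lehmerWeight R (m + 1) (n + 1) * lehmerSeq R Q (m + 1) * lehmerSeq R Q (n + 1) -
        Q * lehmerWeight R m n * lehmerSeq R Q m * lehmerSeq R Q n := by
  induction m using Nat.twoStepInduction with
  | zero => simp [lehmerSeq_zero, lehmerSeq_one, lehmerWeight]
  | one =>
    have hcoeff : lehmerWeight R 2 (n + 1) = lehmerCoeff R n := by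
      by_cases hn : Even n <;> simp [lehmerWeight, lehmerCoeff, Nat.even_add_one, hn]
    have hweight : lehmerWeight R 1 n = 1 := by simp [lehmerWeight]
    rw [show 1 + n + 1 = n + 2 by ring, lehmerSeq_add_two, hcoeff, hweight, lehmerSeq_two,
      lehmerSeq_one]
    ring
  | more m ih₀ ih₁ =>
    have hsum := lehmerSeq_add_two R Q (m + n + 1)
    have hm₂ := lehmerSeq_add_two R Q m
    have hm₃ := lehmerSeq_add_two R Q (m + 1)
    have hweight := lehmerCoeff_mul_lehmerWeight R m n
    have hweight' := lehmerCoeff_mul_lehmerWeight R (m + 1) (n + 1)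
    rw [show m + 1 + (n + 1) + 1 = m + n + 1 + 2 by ring, lehmerCoeff_add_two] at hweight'
    rw [show m + 1 + n + 1 = m + n + 2 by ring] at ih₁
    rw [show m + 2 + n + 1 = m + n + 3 by ring, show m + 2 + 1 = m + 1 + 2 by ring,
      lehmerWeight_add_two_left, lehmerWeight_add_two_left]
    linear_combination hsum + lehmerCoeff R (m + n + 1) * ih₁ - Q * ih₀ -
      lehmerWeight R (m + 1) (n + 1) * lehmerSeq R Q (n + 1) * hm₃ +
      Q * lehmerWeight R m n * lehmerSeq R Q n * hm₂ +
      lehmerSeq R Q (m + 2) * lehmerSeq R Q (n + 1) * hweight' -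
      Q * lehmerSeq R Q (m + 1) * lehmerSeq R Q n * hweight

theorem lehmerSeq_dvd_lehmerSeq_add {d n : ℕ} (h : lehmerSeq R Q d ∣ lehmerSeq R Q n) :
    lehmerSeq R Q d ∣ lehmerSeq R Q (n + d) := by
  cases d with
  | zero => exact h
  | succ d =>
    rw [show n + (d + 1) = d + n + 1 by ring, lehmerSeq_add_add_one]
    exact dvd_sub ((dvd_mul_left _ _).mul_right _) (h.mul_left _)

theorem lehmerSeq_dvd {n m : ℕ} (h : n ∣ m) : lehmerSeq R Q n ∣ lehmerSeq R Q m := by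
  obtain ⟨k, rfl⟩ := h
  induction k with
  | zero => exact dvd_zero _
  | succ k ih => exact lehmerSeq_dvd_lehmerSeq_add R Q ih

variable {R Q}

theorem eq_mul_lehmerSeq {a : A} {x : ℕ → A} (hx0 : x 0 = 0) (hx1 : x 1 = a) (hx2 : x 2 = a)
    (hx3 : x 3 = a * (R - Q))
    (hrec : ∀ k, x (k + 4) = (R - 2 * Q) * x (k + 2) - Q ^ 2 * x k) :
    ∀ n, x n = a * lehmerSeq R Q n
  | 0 => by rw [hx0, lehmerSeq_zero, mul_zero]
  | 1 => by rw [hx1, lehmerSeq_one, mul_one]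
  | 2 => by rw [hx2, lehmerSeq_two, mul_one]
  | 3 => by rw [hx3, lehmerSeq_three]
  | n + 4 => by
    rw [hrec, eq_mul_lehmerSeq hx0 hx1 hx2 hx3 hrec (n + 2),
      eq_mul_lehmerSeq hx0 hx1 hx2 hx3 hrec n, lehmerSeq_add_four]
    ring

theorem order_four_recurrence_is_divisibility_sequence_general {a : A} {x : ℕ → A}
    (hx0 : x 0 = 0) (hx1 : x 1 = a) (hx2 : x 2 = a) (hx3 : x 3 = a * (R - Q))
    (hrec : ∀ k, x (k + 4) = (R - 2 * Q) * x (k + 2) - Q ^ 2 * x k) {n m : ℕ} (h : n ∣ m) :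
    x n ∣ x m := by
  simp only [eq_mul_lehmerSeq hx0 hx1 hx2 hx3 hrec]
  exact mul_dvd_mul_left a (lehmerSeq_dvd R Q h)

end Lehmer

/-- The order-4 recurrence sequence with initial conditions
`0, a, a, a(T+1)` and recurrence `x(k+4) = T·x(k+2) − x(k)` is a linear
divisibility sequence. -/
theorem order_four_recurrence_is_divisibility_sequence
    (a T : ℤ) (ha : a ≠ 0) (hT : T ≠ 0)
    (x : ℕ → ℤ)
    (hx0 : x 0 = 0) (hx1 : x 1 = a) (hx2 : x 2 = a) (hx3 : x 3 = a * (T + 1))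
    (hrec : ∀ k : ℕ, x (k + 4) = T * x (k + 2) - x k) :
    ∀ n m : ℕ, 0 < n → 0 < m → n ∣ m → x n ∣ x m := by
  intro n m _ _ hnm
  exact order_four_recurrence_is_divisibility_sequence_general (R := T + 2) (Q := 1)
    hx0 hx1 hx2 (by rw [hx3]; ring) (fun k => by rw [hrec]; ring) hnm
end

section
/- Let m be a positive integer such that neither m nor m+1 is a perfect square, let K = ℚ(√m, √(m+1)), and let M = ℤ[√m, √(m+1)] be the ℤ-module with basis {1, √m, √(m+1), √(m(m+1))}. Then η = √m + √(m+1) satisfies N_{K/ℚ}(η) = 1 and η·M ⊆ M (so η ∈ 𝒰_M⁺), η² = 2m+1+2√(m(m+1)) is a unit in the quadratic subfield ℚ(√(m(m+1))) of K, and there exists a ℤ-basis W = {w₁, w₂, w₃, w₄} of M such that, writing η^k = x₁(k)w₁ + x₂(k)w₂ + x₃(k)w₃ + x₄(k)w₄ with x_i(k) ∈ ℤ, the sequence x₁ is a linear divisibility sequence. -/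
open IntermediateField

/-!
Write `η ^ n = p + q √m + r √(m+1) + s √m √(m+1)` and regard `ℤ[√m, √(m+1)]` as the quadratic
extension of `ℤ[√(m+1)]` by `√m`. In any quadratic extension the `√`-part of `z` divides the
`√`-part of every power of `z`, so `q + s √(m+1)` at `n` divides `q + s √(m+1)` at every multiple of
`n`. By parity one of `q`, `s` vanishes at each `n`, so `q + s` divides `q + s √(m+1)`; comparing
coordinates shows that the integer sequence `q + s` is a divisibility sequence, and it is the first
coordinate with respect to the basis `√m, 1, √(m+1), √m √(m+1) - √m`. The norm of `η` is computed in
the same tower: its relative norm to `ℚ(√(m+1))` is `(m+1) - m = 1`.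
-/

section Quadratic

open QuadraticAlgebra

variable {R : Type*} [CommRing R] {c t : R}

theorem im_dvd_im_pow (z : QuadraticAlgebra R c t) (k : ℕ) : z.im ∣ (z ^ k).im := by
  induction k with
  | zero => simp
  | succ k ih =>
    rw [pow_succ, im_mul]
    exact dvd_add (dvd_add (dvd_mul_left _ _) (ih.mul_right _)) (dvd_mul_left _ _)

theorem algebra_norm_eq_quadraticAlgebra_norm (z : QuadraticAlgebra R c t) :
    Algebra.norm R z = norm z :=
  det_toLinearMap_eq_norm z

theorem isIntegral_of_sq_eq_algebraMap {A : Type*} [CommRing A] [Algebra R A] {a : A}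
    (ha : a ^ 2 = algebraMap R A c) : IsIntegral R a :=
  .of_pow two_pos (ha ▸ isIntegral_algebraMap)

variable {F : Type*} [Field F]

theorem isSquare_or_isSquare_mul_of_isSquare_algebraMap [NeZero (2 : F)] {c d : F}
    (h : IsSquare (algebraMap F (QuadraticAlgebra F d 0) c)) : IsSquare c ∨ IsSquare (c * d) := by
  obtain ⟨⟨u, v⟩, huv⟩ := h
  obtain ⟨hre, him⟩ : c = u * u + d * v * v ∧ 0 = u * v + v * u := by
    simpa using QuadraticAlgebra.ext_iff.mp huv
  have hzero : u = 0 ∨ v = 0 := by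
    have : 2 * (u * v) = 0 := by linear_combination -him
    simpa [two_ne_zero] using this
  rcases hzero with rfl | rfl
  · exact .inr ⟨d * v, by linear_combination d * hre⟩
  · exact .inl ⟨u, by linear_combination hre⟩

theorem fact_sq_ne_of_not_isSquare {d : F} (hd : ¬ IsSquare d) :
    Fact (∀ r : F, r ^ 2 ≠ d + 0 * r) :=
  ⟨fun r hr => hd ⟨r, by linear_combination -hr⟩⟩

open Polynomial in
theorem finrank_adjoin_simple_of_sq_eq {K : Type*} [Field K] [Algebra F K] {d : F} {x : K}
    (hd : ¬ IsSquare d) (hx : x ^ 2 = algebraMap F K d) : Module.finrank F F⟮x⟯ = 2 := by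
  have hmonic : (X ^ 2 - C d).Monic := monic_X_pow_sub_C d two_ne_zero
  have hirr : Irreducible (X ^ 2 - C d) :=
    X_pow_sub_C_irreducible_of_prime Nat.prime_two fun r hr => hd ⟨r, by rw [← hr, sq]⟩
  have hroot : aeval x (X ^ 2 - C d) = 0 := by simp [hx]
  rw [adjoin.finrank ⟨_, hmonic, hroot⟩, ← minpoly.eq_of_irreducible_of_monic hirr hroot hmonic,
    natDegree_X_pow_sub_C]

end Quadratic

/-- The algebra `R[√d][√c]`, as a tower of two quadratic algebras: the element `z` is
`z.re.re + z.re.im √d + z.im.re √c + z.im.im √c √d`. For `R = ℤ` it is a model of the module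
`ℤ[√c, √d]` with explicit coordinates, for a field `R` of the biquadratic extension. -/
abbrev BiquadraticAlgebra (R : Type*) [CommRing R] (c d : R) : Type _ :=
  QuadraticAlgebra (QuadraticAlgebra R d 0) (algebraMap R (QuadraticAlgebra R d 0) c) 0

namespace BiquadraticAlgebra

open QuadraticAlgebra

section CommRing

variable {R : Type*} [CommRing R] {c d : R}

/-- The element `√c + √d` of `R[√d][√c]`, whose powers are studied. -/
@[simps]
def sqrtAddSqrt (c d : R) : BiquadraticAlgebra R c d :=
  ⟨ω, 1⟩

theorem norm_sqrtAddSqrt (c d : R) : norm (sqrtAddSqrt c d) = algebraMap R _ (d - c) := by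
  ext <;> simp [norm_def]

theorem sqrtAddSqrt_pow_of_even {n : ℕ} (hn : Even n) :
    (sqrtAddSqrt c d ^ n).re.im = 0 ∧ (sqrtAddSqrt c d ^ n).im.re = 0 := by
  obtain ⟨j, rfl⟩ := even_iff_exists_two_mul.mp hn
  clear hn
  rw [pow_mul, sq]
  induction j with
  | zero => simp
  | succ j ih => simp [pow_succ, ih]

theorem im_im_sqrtAddSqrt_pow_of_odd {n : ℕ} (hn : Odd n) : (sqrtAddSqrt c d ^ n).im.im = 0 := by
  obtain ⟨j, rfl⟩ := hn
  have heven := sqrtAddSqrt_pow_of_even (c := c) (d := d) (even_two_mul j)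
  simp [pow_succ, heven]

/-- The sum of the coefficients of `√c` and `√c √d` in `(√c + √d) ^ n`. With `α, β = √d ± √c`, it is
the Lehmer number `(α ^ n - β ^ n) / (α - β)` for odd `n`, and twice the Lehmer number
`(α ^ n - β ^ n) / (α ^ 2 - β ^ 2)` for even `n`. -/
def lehmerSeq (c d : R) (n : ℕ) : R :=
  (sqrtAddSqrt c d ^ n).im.re + (sqrtAddSqrt c d ^ n).im.im

theorem algebraMap_lehmerSeq_dvd_im_pow (c d : R) (n : ℕ) :
    algebraMap R (QuadraticAlgebra R d 0) (lehmerSeq c d n) ∣ (sqrtAddSqrt c d ^ n).im := by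
  rw [lehmerSeq, algebraMap_dvd_iff]
  rcases n.even_or_odd with hn | hn
  · simp [sqrtAddSqrt_pow_of_even hn]
  · simp [im_im_sqrtAddSqrt_pow_of_odd hn]

theorem lehmerSeq_dvd_lehmerSeq (c d : R) {n k : ℕ} (hnk : n ∣ k) :
    lehmerSeq c d n ∣ lehmerSeq c d k := by
  obtain ⟨l, rfl⟩ := hnk
  have him : algebraMap R _ (lehmerSeq c d n) ∣ (sqrtAddSqrt c d ^ (n * l)).im := by
    rw [pow_mul]
    exact (algebraMap_lehmerSeq_dvd_im_pow c d n).trans (im_dvd_im_pow _ l)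
  rw [algebraMap_dvd_iff] at him
  exact dvd_add him.1 him.2

/-- The basis `√c, 1, √d, √c √d - √c` of `R[√d][√c]`, chosen so that the first coordinate of an
element is the sum of its coefficients of `√c` and `√c √d`. -/
noncomputable def lehmerBasis (c d : R) : Module.Basis (Fin 4) R (BiquadraticAlgebra R c d) :=
  .ofEquivFun
    { toFun z := ![z.im.re + z.im.im, z.re.re, z.re.im, z.im.im]
      invFun g := ⟨⟨g 1, g 2⟩, ⟨g 0 - g 3, g 3⟩⟩
      map_add' z w := by ext i; fin_cases i <;> simp [add_add_add_comm]
      map_smul' r z := by ext i; fin_cases i <;> simp [mul_add]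
      left_inv z := by ext <;> simp
      right_inv g := by ext i; fin_cases i <;> simp }

theorem lehmerBasis_repr_sqrtAddSqrt_pow_zero (c d : R) (n : ℕ) :
    (lehmerBasis c d).repr (sqrtAddSqrt c d ^ n) 0 = lehmerSeq c d n :=
  rfl

variable {A : Type*} [CommRing A] [Algebra R A] {a b : A}

/-- The homomorphism `R[√d][√c] → A` sending `√c` and `√d` to given square roots `a` of `c` and `b`
of `d`. -/
noncomputable def lift (ha : a ^ 2 = algebraMap R A c) (hb : b ^ 2 = algebraMap R A d) :
    BiquadraticAlgebra R c d →ₐ[R] A :=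
  AlgHom.ofLinearMap
    { toFun z := z.re.re • (1 : A) + z.im.re • a + z.re.im • b + z.im.im • (a * b)
      map_add' z w := by simp only [re_add, im_add]; module
      map_smul' r z := by simp only [re_smul, im_smul, RingHom.id_apply]; module }
    (by simp)
    (fun z w => by
      simp only [LinearMap.coe_mk, AddHom.coe_mk, Algebra.smul_def, re_mul, im_mul, re_add, im_add,
        algebraMap_re, algebraMap_im, mul_zero, zero_mul, add_zero, map_add, map_mul, ← ha, ← hb]
      ring)

variable (ha : a ^ 2 = algebraMap R A c) (hb : b ^ 2 = algebraMap R A d)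

theorem lift_apply (z : BiquadraticAlgebra R c d) :
    lift ha hb z = z.re.re • (1 : A) + z.im.re • a + z.re.im • b + z.im.im • (a * b) :=
  rfl

theorem lift_omega : lift ha hb ω = a := by
  simp [lift_apply]

theorem lift_algebraMap_omega : lift ha hb (algebraMap (QuadraticAlgebra R d 0) _ ω) = b := by
  simp [lift_apply]

theorem lift_sqrtAddSqrt : lift ha hb (sqrtAddSqrt c d) = a + b := by
  simp [lift_apply]

theorem range_lift :
    LinearMap.range (lift ha hb).toLinearMap = Submodule.span R {1, a, b, a * b} := by
  apply le_antisymm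
  · rintro _ ⟨z, rfl⟩
    simp only [Submodule.mem_span_insert, Submodule.mem_span_singleton]
    exact ⟨z.re.re, _, ⟨z.im.re, _, ⟨z.re.im, _, ⟨z.im.im, rfl⟩, rfl⟩, rfl⟩,
      by simp [lift_apply, add_assoc]⟩
  · rw [Submodule.span_le]
    rintro _ (rfl | rfl | rfl | rfl)
    · exact ⟨1, map_one (lift ha hb)⟩
    · exact ⟨ω, lift_omega ha hb⟩
    · exact ⟨_, lift_algebraMap_omega ha hb⟩
    · exact ⟨ω * algebraMap _ _ ω, by
        rw [AlgHom.toLinearMap_apply, map_mul, lift_omega, lift_algebraMap_omega]⟩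

theorem lift_injective_of_faithfulSMul {S : Type*} [CommRing S] [Algebra R S] [Algebra S A]
    [IsScalarTower R S A] [FaithfulSMul R S] (haS : a ^ 2 = algebraMap S A (algebraMap R S c))
    (hbS : b ^ 2 = algebraMap S A (algebraMap R S d))
    (hinj : Function.Injective (lift haS hbS)) : Function.Injective (lift ha hb) := by
  rw [injective_iff_map_eq_zero] at hinj ⊢
  intro z hz
  have hzS := hinj ⟨⟨algebraMap R S z.re.re, algebraMap R S z.re.im⟩,
    ⟨algebraMap R S z.im.re, algebraMap R S z.im.im⟩⟩ (by simpa [lift_apply] using hz)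
  simpa [QuadraticAlgebra.ext_iff] using hzS

theorem norm_lift (hbij : Function.Bijective (lift ha hb)) (z : BiquadraticAlgebra R c d) :
    Algebra.norm R (lift ha hb z) = norm (norm z) := by
  rw [← AlgEquiv.ofBijective_apply (hf := hbij), Algebra.norm_eq_of_algEquiv,
    ← Algebra.norm_norm (S := QuadraticAlgebra R d 0), algebra_norm_eq_quadraticAlgebra_norm,
    algebra_norm_eq_quadraticAlgebra_norm]

theorem algebra_norm_add (hbij : Function.Bijective (lift ha hb)) :
    Algebra.norm R (a + b) = (d - c) ^ 2 := by
  rw [← lift_sqrtAddSqrt ha hb, norm_lift ha hb hbij, norm_sqrtAddSqrt,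
    QuadraticAlgebra.norm_algebraMap]

include ha hb

theorem add_mul_mem_span {z : A} (hz : z ∈ Submodule.span R {1, a, b, a * b}) :
    (a + b) * z ∈ Submodule.span R {1, a, b, a * b} := by
  rw [← range_lift ha hb] at hz ⊢
  obtain ⟨y, rfl⟩ := hz
  exact ⟨sqrtAddSqrt c d * y, by simp [lift_sqrtAddSqrt]⟩

theorem exists_basis_first_coord_add_pow_dvd (hinj : Function.Injective (lift ha hb)) :
    ∃ w : Fin 4 → A,
      Submodule.span R (Set.range w) = Submodule.span R {1, a, b, a * b} ∧
      LinearIndependent R w ∧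
      ∃ x : Fin 4 → ℕ → R,
        (∀ k, (a + b) ^ k = ∑ i, x i k • w i) ∧ ∀ n k, n ∣ k → x 0 n ∣ x 0 k := by
  let B := lehmerBasis c d
  refine ⟨lift ha hb ∘ B, ?_, ?_, fun i k => B.repr (sqrtAddSqrt c d ^ k) i, fun k => ?_,
    fun n k hnk => ?_⟩
  · rw [← range_lift ha hb, LinearMap.range_eq_map, ← B.span_eq, Submodule.map_span,
      ← Set.range_comp]
    rfl
  · exact B.linearIndependent.map_injOn (lift ha hb).toLinearMap hinj.injOn
  · calc (a + b) ^ k = lift ha hb (sqrtAddSqrt c d ^ k) := by rw [map_pow, lift_sqrtAddSqrt]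
      _ = lift ha hb (∑ i, B.repr (sqrtAddSqrt c d ^ k) i • B i) := by rw [B.sum_repr]
      _ = ∑ i, B.repr (sqrtAddSqrt c d ^ k) i • (lift ha hb ∘ B) i := by
        simp only [map_sum, map_smul, Function.comp_apply]
  · simpa only [B, lehmerBasis_repr_sqrtAddSqrt_pow_zero] using lehmerSeq_dvd_lehmerSeq c d hnk

end CommRing

section Field

variable {F : Type*} [Field F] {c d : F}

theorem isField [NeZero (2 : F)] (hc : ¬ IsSquare c) (hd : ¬ IsSquare d)
    (hcd : ¬ IsSquare (c * d)) : IsField (BiquadraticAlgebra F c d) := by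
  have := fact_sq_ne_of_not_isSquare hd
  have hc' : ¬ IsSquare (algebraMap F (QuadraticAlgebra F d 0) c) := fun h =>
    (isSquare_or_isSquare_mul_of_isSquare_algebraMap h).elim hc hcd
  have := fact_sq_ne_of_not_isSquare hc'
  exact Field.toIsField _

theorem lift_injective [NeZero (2 : F)] {A : Type*} [CommRing A] [Nontrivial A] [Algebra F A]
    {a b : A} (ha : a ^ 2 = algebraMap F A c) (hb : b ^ 2 = algebraMap F A d)
    (hc : ¬ IsSquare c) (hd : ¬ IsSquare d) (hcd : ¬ IsSquare (c * d)) :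
    Function.Injective (lift ha hb) := by
  let := (isField hc hd hcd).toField
  exact (lift ha hb).toRingHom.injective

variable {K : Type*} [Field K] [Algebra F K] {a b : K}
  (ha : a ^ 2 = algebraMap F K c) (hb : b ^ 2 = algebraMap F K d)

theorem lift_surjective (hgen : IntermediateField.adjoin F {a, b} = ⊤) :
    Function.Surjective (lift ha hb) := by
  have halg : ∀ x ∈ ({a, b} : Set K), IsAlgebraic F x := by
    rintro _ (rfl | rfl)
    · exact (isIntegral_of_sq_eq_algebraMap ha).isAlgebraic
    · exact (isIntegral_of_sq_eq_algebraMap hb).isAlgebraic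
  have hadjoin : Algebra.adjoin F {a, b} = ⊤ := by
    rw [← adjoin_toSubalgebra_of_isAlgebraic halg, hgen, top_toSubalgebra]
  rw [← AlgHom.range_eq_top, eq_top_iff, ← hadjoin, Algebra.adjoin_le_iff]
  rintro _ (rfl | rfl)
  · exact ⟨ω, lift_omega ha hb⟩
  · exact ⟨_, lift_algebraMap_omega ha hb⟩

include ha hb in
theorem add_sq_mem_adjoin_simple_mul : (a + b) ^ 2 ∈ F⟮a * b⟯ := by
  have hsq : (a + b) ^ 2 = algebraMap F K (c + d) + 2 * (a * b) := by
    rw [map_add, ← ha, ← hb]; ring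
  rw [hsq]
  exact add_mem (IntermediateField.algebraMap_mem _ _)
    (mul_mem (ofNat_mem _ 2) (mem_adjoin_simple_self F _))

end Field

end BiquadraticAlgebra

theorem not_isSquare_mul_add_one {m : ℕ} (hm : 0 < m) : ¬ IsSquare (m * (m + 1)) := by
  rintro ⟨r, hr⟩
  have hlow : m < r := by nlinarith
  have hhigh : r < m + 1 := by nlinarith
  omega

theorem inv_add_eq_sub {K : Type*} [Field K] {a b : K} (h : b ^ 2 = a ^ 2 + 1) :
    (a + b)⁻¹ = b - a :=
  inv_eq_of_mul_eq_one_right (by linear_combination h)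

/-- Theorem 2. For `K = ℚ(√m, √(m+1))` with `m, m+1` nonsquare and
`M = ℤ[√m, √(m+1)]` (with ℤ-basis `{1, √m, √(m+1), √(m(m+1))}`), the element
`η = √m + √(m+1)` has norm 1 and satisfies `η·M ⊆ M` (so `η ∈ 𝒰_M⁺`),
`η² = 2m+1+2√(m(m+1))` is a unit in the quadratic subfield `ℚ(√(m(m+1)))`, and
there is a ℤ-basis `W` of `M` making the first coordinate sequence of `η^k` a
linear divisibility sequence. -/
theorem sqrt_m_sqrt_m_add_one_LDS
    (m : ℕ) (hm : 0 < m) (hm1 : ¬ IsSquare m) (hm2 : ¬ IsSquare (m + 1))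
    (K : Type*) [Field K] [NumberField K]
    (a b : K) (ha : a ^ 2 = (m : K)) (hb : b ^ 2 = (m : K) + 1)
    (hgen : IntermediateField.adjoin ℚ {a, b} = (⊤ : IntermediateField ℚ K))
    (M : Submodule ℤ K)
    (hM : M = Submodule.span ℤ ({1, a, b, a * b} : Set K))
    (η : K) (hη : η = a + b) :
    Algebra.norm ℚ η = 1 ∧
    (∀ z ∈ M, η * z ∈ M) ∧
    η ^ 2 = 2 * (m : K) + 1 + 2 * (a * b) ∧
    η ^ 2 ∈ (ℚ⟮a * b⟯ : IntermediateField ℚ K) ∧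
    Module.finrank ℚ (ℚ⟮a * b⟯ : IntermediateField ℚ K) = 2 ∧
    IsIntegral ℤ (η ^ 2) ∧ IsIntegral ℤ (η ^ 2)⁻¹ ∧
    ∃ w : Fin 4 → K,
      Submodule.span ℤ (Set.range w) = M ∧ LinearIndependent ℤ w ∧
      ∃ x : Fin 4 → ℕ → ℤ,
        (∀ k : ℕ, η ^ k = ∑ i : Fin 4, (x i k : K) * w i) ∧
        (∀ n' m' : ℕ, 0 < n' → 0 < m' → n' ∣ m' → x 0 n' ∣ x 0 m') := by
  subst hM hη
  have haZ : a ^ 2 = algebraMap ℤ K m := by simpa using ha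
  have hbZ : b ^ 2 = algebraMap ℤ K (m + 1) := by simpa using hb
  have haQ : a ^ 2 = algebraMap ℚ K (algebraMap ℤ ℚ m) := by simpa using ha
  have hbQ : b ^ 2 = algebraMap ℚ K (algebraMap ℤ ℚ (m + 1)) := by simpa using hb
  have hm3 := not_isSquare_mul_add_one hm
  rw [← Rat.isSquare_natCast_iff] at hm1 hm2 hm3
  have hinjQ : Function.Injective (BiquadraticAlgebra.lift haQ hbQ) :=
    BiquadraticAlgebra.lift_injective haQ hbQ (by simpa using hm1) (by simpa using hm2)
      (by simpa using hm3)
  have hinv : (a + b)⁻¹ = b - a := inv_add_eq_sub (by rw [hb, ha])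
  have hia : IsIntegral ℤ a := isIntegral_of_sq_eq_algebraMap haZ
  have hib : IsIntegral ℤ b := isIntegral_of_sq_eq_algebraMap hbZ
  refine ⟨?_, fun z => BiquadraticAlgebra.add_mul_mem_span haZ hbZ, ?_,
    BiquadraticAlgebra.add_sq_mem_adjoin_simple_mul haQ hbQ, ?_,
    (hia.add hib).pow 2, inv_pow (a + b) 2 ▸ hinv ▸ (hib.sub hia).pow 2, ?_⟩
  · simpa using BiquadraticAlgebra.algebra_norm_add haQ hbQ
      ⟨hinjQ, BiquadraticAlgebra.lift_surjective haQ hbQ hgen⟩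
  · linear_combination ha + hb
  · exact finrank_adjoin_simple_of_sq_eq hm3 (by simp [mul_pow, ha, hb])
  · obtain ⟨w, hspan, hli, x, hpow, hdvd⟩ :=
      BiquadraticAlgebra.exists_basis_first_coord_add_pow_dvd haZ hbZ
        (BiquadraticAlgebra.lift_injective_of_faithfulSMul haZ hbZ haQ hbQ hinjQ)
    exact ⟨w, hspan, hli, x, by simpa only [zsmul_eq_mul] using hpow, fun n k _ _ => hdvd n k⟩
end

section
/- Let K be a quartic number field with a real quadratic subfield L, and let η ∈ K be an algebraic integer of degree 4 over ℚ with N_{K/ℚ}(η) = 1 such that ε := η² lies in L and is a unit of the ring of integers of L. Let T = Tr_{L/ℚ}(ε), fix a nonzero β ∈ K, and let u be the Lucas sequence with parameters (T, 1). Then there exists a ℤ-basis W = {w₁, w₂, w₃, w₄} of the module M′ = β·ℤ[η] such that, writing β·η^k = x₁(k)w₁ + x₂(k)w₂ + x₃(k)w₃ + x₄(k)w₄ with x_i(k) ∈ ℤ, for every integer n ≥ 1 we have: x₁(2n) = u(n) and x₁(2n+1) = u(n+1) + u(n); x₂(2n) = 0 and x₂(2n+1) = u(n); x₃(2n) = −u(n−1)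 and x₃(2n+1) = 0; x₄(2n) = 0 and x₄(2n+1) = −u(n−1). -/
open Polynomial

/-!
Since `[L : ℚ] = 2`, `ε` satisfies `ε² = Tε - N_{L/ℚ}(ε)`. As `η ∉ L` and `η² = ε`, the norm of `η`
down to `L` is `-ε`, so transitivity of the norm gives `N_{L/ℚ}(ε) = N_{K/ℚ}(η) = 1` and hence
`η⁴ = Tη² - 1`. Powers of a root of `X² - TX + 1` are governed by the Lucas sequence `u`, which
expresses `η^(2n)` through `1, η²` and `η^(2n+1)` through `η, η³`. The basis `W` is a unimodular
change of `β, βη, βη², βη³`.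
-/

section QuadraticExtension

theorem sq_eq_trace_smul_sub_algebraMap_norm {R S : Type*} [CommRing R] [Nontrivial R] [CommRing S]
    [Algebra R S] [Module.Free R S] (hS : Module.finrank R S = 2) (x : S) :
    x ^ 2 = Algebra.trace R S x • x - algebraMap R S (Algebra.norm R x) := by
  have : Module.Finite R S := Module.finite_of_finrank_eq_succ hS
  have cayley_hamilton := Algebra.aeval_self_charpoly_lmul (R := R) x
  let b := Module.finBasisOfFinrankEq R S hS
  rw [← LinearMap.charpoly_toMatrix _ b, Matrix.charpoly_fin_two, ← Algebra.leftMulMatrix_apply,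
    ← Algebra.trace_eq_matrix_trace, ← Algebra.norm_eq_matrix_det] at cayley_hamilton
  simp only [map_add, map_sub, map_mul, map_pow, aeval_X, aeval_C, ← Algebra.smul_def]
    at cayley_hamilton
  linear_combination cayley_hamilton

variable {F L K : Type*} [Field F] [Field L] [Field K] [Algebra F L] [Algebra L K] [Algebra F K]
  [IsScalarTower F L K]

theorem norm_eq_neg_of_sq_eq_algebraMap (hK : Module.finrank L K = 2) {x : K} {a : L}
    (hx : x ∉ Set.range (algebraMap L K)) (hxa : x ^ 2 = algebraMap L K a) :
    Algebra.norm L x = -a := by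
  have trace_mul : algebraMap L K (Algebra.trace L K x) * x =
      algebraMap L K (a + Algebra.norm L x) := by
    rw [map_add, ← hxa, sq_eq_trace_smul_sub_algebraMap_norm hK x, Algebra.smul_def]
    ring
  have trace_eq_zero : Algebra.trace L K x = 0 := by
    by_contra trace_ne_zero
    refine hx ⟨(a + Algebra.norm L x) / Algebra.trace L K x, ?_⟩
    rw [map_div₀, ← trace_mul, mul_div_cancel_left₀]
    exact (_root_.map_ne_zero _).2 trace_ne_zero
  rw [trace_eq_zero, map_zero, zero_mul, eq_comm, map_eq_zero] at trace_mul
  exact (neg_eq_of_add_eq_zero_right trace_mul).symm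

theorem norm_eq_norm_of_sq_eq_algebraMap (hL : Even (Module.finrank F L))
    (hK : Module.finrank L K = 2) {x : K} {a : L} (hx : x ∉ Set.range (algebraMap L K))
    (hxa : x ^ 2 = algebraMap L K a) : Algebra.norm F x = Algebra.norm F a := by
  have norm_neg_one : Algebra.norm F (-1 : L) = 1 := by
    simpa [hL.neg_one_pow] using Algebra.norm_algebraMap (S := L) (-1 : F)
  rw [← Algebra.norm_norm (S := L), norm_eq_neg_of_sq_eq_algebraMap hK hx hxa, neg_eq_neg_one_mul,
    map_mul, norm_neg_one, one_mul]

theorem notMem_range_algebraMap_of_finrank_lt_natDegree_minpoly [FiniteDimensional F L] {x : K}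
    (hx : Module.finrank F L < (minpoly F x).natDegree) : x ∉ Set.range (algebraMap L K) := by
  rintro ⟨a, rfl⟩
  rw [minpoly.algebraMap_eq (algebraMap L K).injective] at hx
  exact hx.not_ge (minpoly.natDegree_le a)

theorem pow_four_eq_trace_smul_sq_sub_norm (hK : Module.finrank F K = 4)
    (hL : Module.finrank F L = 2) {η : K} (hη : (minpoly F η).natDegree = 4) {ε : L}
    (hε : algebraMap L K ε = η ^ 2) :
    η ^ 4 = Algebra.trace F L ε • η ^ 2 - algebraMap F K (Algebra.norm F η) := by
  have : FiniteDimensional F L := Module.finite_of_finrank_eq_succ hL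
  have hLK : Module.finrank L K = 2 := by
    have := Module.finrank_mul_finrank F L K
    lia
  have hηL : η ∉ Set.range (algebraMap L K) :=
    notMem_range_algebraMap_of_finrank_lt_natDegree_minpoly (F := F) (by lia)
  have norm_eq : Algebra.norm F η = Algebra.norm F ε :=
    norm_eq_norm_of_sq_eq_algebraMap (by simp [hL]) hLK hηL hε.symm
  calc η ^ 4 = algebraMap L K (ε ^ 2) := by rw [map_pow, hε]; ring
    _ = Algebra.trace F L ε • η ^ 2 - algebraMap F K (Algebra.norm F η) := by
      rw [sq_eq_trace_smul_sub_algebraMap_norm hL, norm_eq, map_sub, Algebra.smul_def, map_mul,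
        ← IsScalarTower.algebraMap_apply, ← IsScalarTower.algebraMap_apply, hε, Algebra.smul_def]

end QuadraticExtension

theorem linearIndependent_mul_pow {R F K : Type*} [CommRing R] [Field F] [Field K] [Algebra R F]
    [Algebra F K] [Algebra R K] [IsScalarTower R F K] [FaithfulSMul R F] {β : K} (hβ : β ≠ 0)
    (η : K) {d : ℕ} (hη : (minpoly F η).natDegree = d) :
    LinearIndependent R fun i : Fin d => β * η ^ (i : ℕ) := by
  subst hη
  exact ((linearIndependent_pow (K := F) η).map' (LinearMap.mulLeft F β)
    (LinearMap.ker_eq_bot.2 (mul_right_injective₀ hβ))).restrict_scalars' R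

section AdaptedFamily

variable {R M : Type*} [CommRing R] [AddCommGroup M] [Module R M]

/-- The unimodular change of a four-term family which turns `β, βη, βη², βη³` into the basis `W`.
It is forced by the prescribed coordinates of `β * η ^ k` at `k = 0, 1, 2, 3`, namely
`w₂`, `w₀ + w₃`, `w₀` and `(T + 1) • w₀ + w₁` (indexing from `0`). -/
def adaptedFamily (T : R) (v : Fin 4 → M) : Fin 4 → M :=
  ![v 2, v 3 - (T + 1) • v 2, v 0, v 1 - v 2]

theorem span_range_adaptedFamily (T : R) (v : Fin 4 → M) :
    Submodule.span R (Set.range (adaptedFamily T v)) = Submodule.span R (Set.range v) := by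
  apply le_antisymm <;> rw [Submodule.span_le, Set.range_subset_iff]
  · have mem (i : Fin 4) : v i ∈ Submodule.span R (Set.range v) := Submodule.subset_span ⟨i, rfl⟩
    intro i
    fin_cases i
    · exact mem 2
    · exact sub_mem (mem 3) (Submodule.smul_mem _ _ (mem 2))
    · exact mem 0
    · exact sub_mem (mem 1) (mem 2)
  · have mem (i : Fin 4) : adaptedFamily T v i ∈ Submodule.span R (Set.range (adaptedFamily T v)) :=
      Submodule.subset_span ⟨i, rfl⟩
    intro i
    fin_cases i
    · exact mem 2
    · simpa [adaptedFamily] using add_mem (mem 3) (mem 0)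
    · exact mem 0
    · simpa [adaptedFamily] using add_mem (mem 1) (Submodule.smul_mem _ (T + 1) (mem 0))

theorem linearIndependent_adaptedFamily {v : Fin 4 → M} (hv : LinearIndependent R v) (T : R) :
    LinearIndependent R (adaptedFamily T v) := by
  rw [Fintype.linearIndependent_iff] at hv ⊢
  intro c hc
  have hcv := hv ![c 2, c 3, c 0 - (T + 1) * c 1 - c 3, c 1] (by
    simp only [Fin.sum_univ_four, adaptedFamily, Matrix.cons_val] at hc ⊢
    rw [← hc]
    module)
  have h₂ : c 2 = 0 := hcv 0
  have h₃ : c 3 = 0 := hcv 1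
  have h₁ : c 1 = 0 := hcv 3
  have h₀ : c 0 = 0 := by simpa [h₁, h₃] using hcv 2
  intro i
  fin_cases i <;> assumption

end AdaptedFamily

/-- `u` is the Lucas sequence with parameters `(P, Q)`, over an arbitrary commutative ring. -/
structure IsLucasSequence {R : Type*} [CommRing R] (P Q : R) (u : ℕ → R) : Prop where
  zero : u 0 = 0
  one : u 1 = 1
  add_two (k : ℕ) : u (k + 2) = P * u (k + 1) - Q * u k

/-- The coordinates of `β * η ^ k` with respect to `adaptedFamily T (β, βη, βη², βη³)`, where
`η ^ 4 = T * η ^ 2 - Q` and `u` is the Lucas sequence with parameters `(T, Q)`. The term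
`u (n + 1) - T * u n` is `-Q * u (n - 1)` for `n ≥ 1`; written this way it is also correct at
`n = 0`. -/
def lucasCoord {R : Type*} [CommRing R] (T : R) (u : ℕ → R) (k : ℕ) : Fin 4 → R :=
  let n := k / 2
  if Even k then ![u n, 0, u (n + 1) - T * u n, 0]
  else ![u (n + 1) + u n, u n, 0, u (n + 1) - T * u n]

section LucasSequence

variable {R : Type*} [CommRing R]

theorem lucasCoord_two_mul (T : R) (u : ℕ → R) (n : ℕ) :
    lucasCoord T u (2 * n) = ![u n, 0, u (n + 1) - T * u n, 0] := by
  simp [lucasCoord]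

theorem lucasCoord_two_mul_add_one (T : R) (u : ℕ → R) (n : ℕ) :
    lucasCoord T u (2 * n + 1) = ![u (n + 1) + u n, u n, 0, u (n + 1) - T * u n] := by
  simp [lucasCoord, Nat.mul_add_div]

namespace IsLucasSequence

variable {P Q : R} {u : ℕ → R}

theorem sub_mul_eq_neg_mul_pred (hu : IsLucasSequence P Q u) {n : ℕ} (hn : 1 ≤ n) :
    u (n + 1) - P * u n = -(Q * u (n - 1)) := by
  obtain ⟨m, rfl⟩ := Nat.exists_eq_add_of_le' hn
  rw [hu.add_two, Nat.add_sub_cancel]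
  ring

variable {A : Type*} [CommRing A] [Algebra R A]

theorem pow_eq (hu : IsLucasSequence P Q u) {a : A} (ha : a ^ 2 = P • a - algebraMap R A Q)
    (n : ℕ) : a ^ n = u n • a + algebraMap R A (u (n + 1) - P * u n) := by
  simp only [Algebra.smul_def] at ha ⊢
  induction n with
  | zero => simp [hu.zero, hu.one]
  | succ n ih =>
    rw [pow_succ, ih, hu.add_two]
    simp only [map_sub, map_mul]
    linear_combination algebraMap R A (u n) * ha

theorem mul_pow_eq_sum_lucasCoord_smul (hu : IsLucasSequence P Q u) {η : A}
    (hη : η ^ 4 = P • η ^ 2 - algebraMap R A Q) (β : A) (k : ℕ) :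
    β * η ^ k =
      ∑ i, lucasCoord P u k i • adaptedFamily P (fun i : Fin 4 => β * η ^ (i : ℕ)) i := by
  have pow_two_mul (n : ℕ) :
      η ^ (2 * n) = u n • η ^ 2 + algebraMap R A (u (n + 1) - P * u n) := by
    rw [pow_mul]
    exact hu.pow_eq (by rw [← pow_mul, hη]) n
  obtain ⟨n, rfl | rfl⟩ := k.even_or_odd'
  · rw [lucasCoord_two_mul, pow_two_mul]
    simp only [Fin.sum_univ_four, adaptedFamily, Algebra.smul_def, Matrix.cons_val,
      Fin.coe_ofNat_eq_mod, Nat.reduceMod, map_add, map_sub, map_mul, map_zero, map_one]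
    ring
  · rw [lucasCoord_two_mul_add_one, pow_succ, pow_two_mul]
    simp only [Fin.sum_univ_four, adaptedFamily, Algebra.smul_def, Matrix.cons_val,
      Fin.coe_ofNat_eq_mod, Nat.reduceMod, map_add, map_sub, map_mul, map_zero, map_one]
    ring

end IsLucasSequence

end LucasSequence

theorem coordinate_sequences_explicit_formulas_general
    {R F L K : Type*} [CommRing R] [Field F] [Field L] [Field K] [Algebra R F] [FaithfulSMul R F]
    [Algebra F L] [Algebra L K] [Algebra F K] [Algebra R K] [IsScalarTower F L K]
    [IsScalarTower R F K] (hK : Module.finrank F K = 4) (hL : Module.finrank F L = 2)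
    {η : K} (hηdeg : (minpoly F η).natDegree = 4) {Q : R}
    (hηnorm : Algebra.norm F η = algebraMap R F Q)
    {ε : L} (hε : algebraMap L K ε = η ^ 2)
    {T : R} (hT : algebraMap R F T = Algebra.trace F L ε)
    {u : ℕ → R} (hu : IsLucasSequence T Q u) {β : K} (hβ : β ≠ 0) :
    ∃ w : Fin 4 → K,
      Submodule.span R (Set.range w)
        = Submodule.span R (Set.range fun i : Fin 4 => β * η ^ (i : ℕ)) ∧
      LinearIndependent R w ∧
      ∃ x : Fin 4 → ℕ → R,
        (∀ k : ℕ, β * η ^ k = ∑ i : Fin 4, x i k • w i) ∧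
        ∀ n : ℕ, 1 ≤ n →
          x 0 (2 * n) = u n ∧ x 0 (2 * n + 1) = u (n + 1) + u n ∧
          x 1 (2 * n) = 0 ∧ x 1 (2 * n + 1) = u n ∧
          x 2 (2 * n) = -(Q * u (n - 1)) ∧ x 2 (2 * n + 1) = 0 ∧
          x 3 (2 * n) = 0 ∧ x 3 (2 * n + 1) = -(Q * u (n - 1)) := by
  have hη : η ^ 4 = T • η ^ 2 - algebraMap R K Q := by
    rw [pow_four_eq_trace_smul_sq_sub_norm hK hL hηdeg hε, ← hT, hηnorm, algebraMap_smul,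
      ← IsScalarTower.algebraMap_apply]
  have hli : LinearIndependent R fun i : Fin 4 => β * η ^ (i : ℕ) :=
    linearIndependent_mul_pow hβ η hηdeg
  refine ⟨adaptedFamily T fun i => β * η ^ (i : ℕ), span_range_adaptedFamily T _,
    linearIndependent_adaptedFamily hli T, fun i k => lucasCoord T u k i,
    hu.mul_pow_eq_sum_lucasCoord_smul hη β, fun n hn => ?_⟩
  simp only [lucasCoord_two_mul, lucasCoord_two_mul_add_one, hu.sub_mul_eq_neg_mul_pred hn]
  exact ⟨rfl, rfl, rfl, rfl, rfl, rfl, rfl, rfl⟩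

/-- Corollary 2. With `K`, `L`, `η`, `ε = η²`, `β` as in Theorem 1
and `T = Tr_{L/ℚ}(ε)`, there is a ℤ-basis `W` of `M′ = β·ℤ[η]` so that for
every `n ≥ 1` the coordinate sequences of `β·η^k` are given by the stated
explicit formulas in terms of the Lucas sequence `u` with parameters
`(T, 1)`. -/
theorem coordinate_sequences_explicit_formulas
    (K : Type*) [Field K] [NumberField K] (hK4 : Module.finrank ℚ K = 4)
    (L : IntermediateField ℚ K) (hL2 : Module.finrank ℚ L = 2) (φ : L →+* ℝ)
    (η : K) (hηint : IsIntegral ℤ η) (hηdeg : (minpoly ℚ η).natDegree = 4)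
    (hηnorm : Algebra.norm ℚ η = 1)
    (ε : L) (hε : (ε : K) = η ^ 2)
    (hεint : IsIntegral ℤ (ε : K)) (hεinv : IsIntegral ℤ ((ε : K))⁻¹)
    (T : ℤ) (hT : (T : ℚ) = Algebra.trace ℚ L ε)
    (u : ℕ → ℤ) (hu0 : u 0 = 0) (hu1 : u 1 = 1)
    (hurec : ∀ k : ℕ, u (k + 2) = T * u (k + 1) - 1 * u k)
    (β : K) (hβ : β ≠ 0) :
    ∃ w : Fin 4 → K,
      Submodule.span ℤ (Set.range w)
        = Submodule.span ℤ (Set.range fun i : Fin 4 => β * η ^ (i : ℕ)) ∧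
      LinearIndependent ℤ w ∧
      ∃ x : Fin 4 → ℕ → ℤ,
        (∀ k : ℕ, β * η ^ k = ∑ i : Fin 4, (x i k : K) * w i) ∧
        ∀ n : ℕ, 1 ≤ n →
          x 0 (2 * n) = u n ∧ x 0 (2 * n + 1) = u (n + 1) + u n ∧
          x 1 (2 * n) = 0 ∧ x 1 (2 * n + 1) = u n ∧
          x 2 (2 * n) = - u (n - 1) ∧ x 2 (2 * n + 1) = 0 ∧
          x 3 (2 * n) = 0 ∧ x 3 (2 * n + 1) = - u (n - 1) := by
  simpa only [zsmul_eq_mul, one_mul] using coordinate_sequences_explicit_formulas_general hK4 hL2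
    hηdeg (hηnorm.trans (map_one _).symm) hε hT ⟨hu0, hu1, hurec⟩ hβ
end

section
/- Let α be an algebraic integer that is not a root of unity, of degree n over ℚ, with minimal polynomial f(X) = X^n − s₁X^{n−1} − ⋯ − s_n, and set K = ℚ(α). Suppose there is a divisor t of n with t ≥ 2 such that s_i = 0 for every index i (1 ≤ i ≤ n) not divisible by t. Then for every integer k ≥ 1 with k ≡ 1 (mod t), we have d_k(α) ≤ |disc(1, α, …, α^{n−1})|; equivalently, every positive integer d such that α^k − 1 ∈ d·𝒪_K satisfies d ≤ |disc(1, α, …, α^{n−1})|. -/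
open Polynomial IntermediateField

/-!
If the minimal polynomial of `α` is a polynomial in `X ^ t`, then reducing modulo it preserves
exponents modulo `t`, so for `t ∤ k` the expansion of `α ^ k` in the basis `1, α, …, α ^ (n - 1)`
has no constant term. Hence `z = (α ^ k - 1) / d` has constant coordinate `-1 / d`. If `z` is
integral, then `disc • z` lies in `ℤ[α]` and so has integer coordinates; thus `d ∣ disc`, and
`disc ≠ 0`.
-/

theorem coeff_X_pow_sub_sum_eq_zero_of_not_dvd {R : Type*} [Ring R] {n t : ℕ} (htn : t ∣ n)
    {s : Fin n → R} (hs : ∀ i : Fin n, ¬ t ∣ (i : ℕ) + 1 → s i = 0) {m : ℕ} (hm : ¬ t ∣ m) :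
    (X ^ n - ∑ i : Fin n, C (s i) * X ^ (n - 1 - (i : ℕ))).coeff m = 0 := by
  have hmn : m ≠ n := by rintro rfl; exact hm htn
  simp only [coeff_sub, coeff_X_pow, if_neg hmn, finsetSum_coeff, coeff_C_mul, zero_sub,
    neg_eq_zero]
  refine Finset.sum_eq_zero fun i _ => ?_
  by_cases hmi : m = n - 1 - (i : ℕ)
  · have hn : n = m + ((i : ℕ) + 1) := by omega
    have hti : ¬ t ∣ (i : ℕ) + 1 := fun h => hm ((Nat.dvd_add_left h).mp (hn ▸ htn))
    rw [hs i hti, zero_mul]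
  · rw [if_neg hmi, mul_zero]

section PowerBasis

variable {R S : Type*} [CommRing R] [Nontrivial R] [Ring S] [Algebra R S] (B : PowerBasis R S)

theorem gen_pow_dim_add_eq_neg_sum (c : ℕ) :
    B.gen ^ (B.dim + c) =
      -∑ i ∈ Finset.range B.dim, (minpoly R B.gen).coeff i • B.gen ^ (i + c) := by
  have hroot := minpoly.aeval R B.gen
  have hlead : (minpoly R B.gen).coeff B.dim = 1 := by
    simpa only [B.natDegree_minpoly] using (minpoly.monic B.isIntegral_gen).coeff_natDegree
  rw [aeval_eq_sum_range, B.natDegree_minpoly, Finset.sum_range_succ, hlead, one_smul,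
    add_comm] at hroot
  rw [pow_add, eq_neg_of_add_eq_zero_left hroot, neg_mul, Finset.sum_mul]
  simp only [smul_mul_assoc, pow_add]

theorem repr_gen_pow_eq_zero_of_not_modEq {t : ℕ}
    (hcoeff : ∀ m, ¬ t ∣ m → (minpoly R B.gen).coeff m = 0) (j : Fin B.dim) {m : ℕ}
    (hm : ¬ m ≡ j [MOD t]) : B.basis.repr (B.gen ^ m) j = 0 := by
  have htdim : t ∣ B.dim := by
    by_contra h
    have hlead := (minpoly.monic B.isIntegral_gen).coeff_natDegree
    rw [B.natDegree_minpoly, hcoeff _ h] at hlead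
    exact zero_ne_one hlead
  induction m using Nat.strong_induction_on with
  | _ m ih =>
    obtain hlt | hle := lt_or_ge m B.dim
    · have hne : (⟨m, hlt⟩ : Fin B.dim) ≠ j := by rintro rfl; exact hm rfl
      rw [← B.basis_eq_pow ⟨m, hlt⟩, B.basis.repr_self_apply, if_neg hne]
    · obtain ⟨c, rfl⟩ := Nat.exists_eq_add_of_le hle
      simp only [gen_pow_dim_add_eq_neg_sum, map_neg, map_sum, map_smul, Finsupp.neg_apply,
        Finsupp.finsetSum_apply, Finsupp.smul_apply, neg_eq_zero]
      refine Finset.sum_eq_zero fun i hi => ?_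
      by_cases hti : t ∣ i
      · have hdim_i : B.dim + c ≡ i + c [MOD t] :=
          (htdim.modEq_zero_nat.trans hti.zero_modEq_nat).add_right c
        have hlt : i + c < B.dim + c := Nat.add_lt_add_right (Finset.mem_range.mp hi) c
        rw [ih _ hlt fun h => hm (hdim_i.trans h), smul_zero]
      · rw [hcoeff i hti, zero_smul]

end PowerBasis

section FractionField

variable {R K L : Type*} [CommRing R] [IsIntegrallyClosed R] [Field K] [Algebra R K]
  [IsFractionRing R K] [Field L] [Algebra K L] [Algebra R L] [IsScalarTower R K L]

theorem isIntegral_repr_of_mem_adjoin_gen {B : PowerBasis K L} (hint : IsIntegral R B.gen) {x : L}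
    (hx : x ∈ Algebra.adjoin R {B.gen}) (i : Fin B.dim) : IsIntegral R (B.basis.repr x i) := by
  have : IsDomain R := (IsFractionRing.injective R K).isDomain
  rw [Algebra.adjoin_singleton_eq_range_aeval] at hx
  obtain ⟨p, rfl⟩ := hx
  have hpow (m : ℕ) : IsIntegral R (B.basis.repr (B.gen ^ m) i) :=
    PowerBasis.repr_gen_pow_isIntegral hint
      (minpoly.isIntegrallyClosed_eq_field_fractions' K hint) m i
  simp only [AlgHom.toRingHom_eq_coe, RingHom.coe_coe, aeval_eq_sum_range, map_sum,
    Finsupp.finsetSum_apply]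
  refine IsIntegral.sum _ fun m _ => ?_
  rw [← algebraMap_smul K, map_smul, Finsupp.smul_apply, algebraMap_smul]
  exact (hpow m).smul _

variable [Algebra.IsSeparable K L]

theorem isIntegral_discr_mul_repr {B : PowerBasis K L} (hint : IsIntegral R B.gen) {z : L}
    (hz : IsIntegral R z) (i : Fin B.dim) :
    IsIntegral R (Algebra.discr K B.basis * B.basis.repr z i) := by
  have : Module.Finite K L := B.finite
  simpa only [map_smul, Finsupp.smul_apply, smul_eq_mul] using
    isIntegral_repr_of_mem_adjoin_gen hint (Algebra.discr_mul_isIntegral_mem_adjoin K hint hz) i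

theorem exists_algebraMap_mul_eq_discr {B : PowerBasis K L} (hint : IsIntegral R B.gen) {t : ℕ}
    (hcoeff : ∀ m, ¬ t ∣ m → (minpoly K B.gen).coeff m = 0) {k : ℕ} (hk : ¬ t ∣ k) {d : R} {z : L}
    (hz : IsIntegral R z) (hdz : d • z = B.gen ^ k - 1) :
    ∃ c : R, algebraMap R K (d * c) = Algebra.discr K B.basis := by
  let zeroIdx : Fin B.dim := ⟨0, B.dim_pos⟩
  have hone : B.basis.repr 1 zeroIdx = 1 := by
    rw [← pow_zero B.gen, ← B.basis_eq_pow zeroIdx, B.basis.repr_self_apply, if_pos rfl]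
  have hpow : B.basis.repr (B.gen ^ k) zeroIdx = 0 :=
    repr_gen_pow_eq_zero_of_not_modEq B hcoeff zeroIdx fun h => hk (Nat.modEq_zero_iff_dvd.mp h)
  have hconst : algebraMap R K d * B.basis.repr z zeroIdx = -1 := by
    rw [← smul_eq_mul, ← Finsupp.smul_apply, ← map_smul, algebraMap_smul, hdz, map_sub,
      Finsupp.sub_apply, hpow, hone, zero_sub]
  obtain ⟨c, hc⟩ := IsIntegrallyClosed.isIntegral_iff.mp (isIntegral_discr_mul_repr hint hz zeroIdx)
  refine ⟨-c, ?_⟩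
  rw [map_mul, map_neg, hc]
  linear_combination -Algebra.discr K B.basis * hconst

end FractionField

theorem exists_powerBasis_gen_eq {K L : Type*} [Field K] [Field L] [Algebra K L] {α : L}
    (hα : IsIntegral K α) (hgen : K⟮α⟯ = ⊤) : ∃ B : PowerBasis K L, B.gen = α := by
  have hadjoin : Algebra.adjoin K {α} = ⊤ := by
    rw [← adjoin_simple_toSubalgebra_of_isAlgebraic hα.isAlgebraic, hgen, top_toSubalgebra]
  exact ⟨PowerBasis.ofAdjoinEqTop hα hadjoin, PowerBasis.ofAdjoinEqTop_gen hα hadjoin⟩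

theorem dk_bounded_by_discriminant_general {K : Type*} [Field K] [NumberField K] {α : K}
    (hgen : ℚ⟮α⟯ = ⊤) (hint : IsIntegral ℤ α) {n : ℕ} (hn : n = Module.finrank ℚ K) {t : ℕ}
    (hcoeff : ∀ m, ¬ t ∣ m → (minpoly ℚ α).coeff m = 0) {k : ℕ} (hk : ¬ t ∣ k) {d : ℤ}
    (hd : d ≠ 0) (hdiv : IsIntegral ℤ ((α ^ k - 1) / (d : K))) :
    |(d : ℚ)| ≤ |Algebra.discr ℚ (fun i : Fin n => α ^ (i : ℕ))| := by
  obtain ⟨B, rfl⟩ := exists_powerBasis_gen_eq hint.tower_top hgen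
  obtain rfl : n = B.dim := hn.trans B.finrank
  have hdz : d • ((B.gen ^ k - 1) / (d : K)) = B.gen ^ k - 1 := by
    rw [zsmul_eq_mul, mul_div_cancel₀ _ (Int.cast_ne_zero.mpr hd)]
  obtain ⟨c, hc⟩ := exists_algebraMap_mul_eq_discr hint hcoeff hk hdiv hdz
  have hc0 : c ≠ 0 := by
    rintro rfl
    exact Algebra.discr_not_zero_of_basis ℚ B.basis (by rw [← hc, mul_zero, map_zero])
  rw [← B.coe_basis, ← hc, eq_intCast, Int.cast_mul, abs_mul]
  exact le_mul_of_one_le_right (abs_nonneg _) (by exact_mod_cast Int.one_le_abs hc0)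

/-- Proposition 8. Let `α` be an algebraic integer, not a root of
unity, of degree `n` over `ℚ`, with minimal polynomial
`X^n − s₁X^{n−1} − ⋯ − s_n`, and `K = ℚ(α)`. If `t ∣ n`, `t ≥ 2`, and `s_i = 0`
for every `i` not divisible by `t`, then for every `k ≥ 1` with
`k ≡ 1 (mod t)`, every positive integer `d` with `α^k − 1 ∈ d·𝒪_K` satisfies
`d ≤ |disc(1, α, …, α^{n−1})|`. -/
theorem dk_bounded_by_discriminant
    (K : Type*) [Field K] [NumberField K]
    (α : K) (hgen : (ℚ⟮α⟯ : IntermediateField ℚ K) = ⊤)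
    (hint : IsIntegral ℤ α) (hnru : ∀ j : ℕ, 0 < j → α ^ j ≠ 1)
    (n : ℕ) (hn : n = Module.finrank ℚ K)
    (s : Fin n → ℚ)
    (hmin : minpoly ℚ α = X ^ n - ∑ i : Fin n, C (s i) * X ^ (n - 1 - (i : ℕ)))
    (t : ℕ) (ht2 : 2 ≤ t) (htn : t ∣ n)
    (hs : ∀ i : Fin n, ¬ (t ∣ ((i : ℕ) + 1)) → s i = 0) :
    ∀ k : ℕ, 1 ≤ k → k % t = 1 →
      ∀ d : ℤ, 0 < d → IsIntegral ℤ ((α ^ k - 1) / (d : K)) →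
        (d : ℚ) ≤ |Algebra.discr ℚ (fun i : Fin n => α ^ (i : ℕ))| := by
  intro k _ hkt d hd hdiv
  have hk : ¬ t ∣ k := mt Nat.mod_eq_zero_of_dvd (by lia)
  exact (le_abs_self _).trans (dk_bounded_by_discriminant_general hgen hint hn
    (fun m hm => hmin ▸ coeff_X_pow_sub_sum_eq_zero_of_not_dvd htn hs hm) hk hd.ne' hdiv)
end

section
/- Let α be an algebraic integer that is not a root of unity, of degree n over ℚ, with minimal polynomial f(X) = X^n − s₁X^{n−1} − ⋯ − s_n, and set K = ℚ(α). Suppose there is a divisor t of n with t ≥ 2 such that s_i = 0 for every index i (1 ≤ i ≤ n) not divisible by t, and suppose moreover that 𝒪_K = ℤ[α]. Then d_k(α) = 1 for every integer k ≥ 1 with k ≡ 1 (mod t); in particular, the set {k ≥ 1 : d_k(α) = d₁(α)} is infinite. -/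
open Polynomial IntermediateField

/-!
Let `f` be the minimal polynomial of `α` over `ℤ`; the vanishing coefficients say that
`f = g(X ^ t)`. Since `𝒪_K = ℤ[α] ≅ ℤ[X] / (f)`, a divisor `d` of `α ^ k - 1` gives an identity
`X ^ k - 1 = d * p + q * g(X ^ t)` in `ℤ[X]`. Keep only the monomials whose exponent is divisible
by `t`, and replace `X ^ t` by `X`: this operation is `ℤ[X ^ t]`-linear and, when `t ∤ k`, kills
`X ^ k`, so `-1 = d * p' + q' * g`. Hence the monic nonconstant `g` is a unit modulo `d`, which
forces `d` to be a unit.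
-/

section CommSemiring

variable {R : Type*} [CommSemiring R] {t k : ℕ}

theorem expand_contract_of_coeff_eq_zero (ht : t ≠ 0) {f : R[X]}
    (hf : ∀ j, ¬ t ∣ j → f.coeff j = 0) : expand R t (contract t f) = f := by
  ext j
  rw [coeff_expand (Nat.pos_of_ne_zero ht)]
  split_ifs with hj
  · rw [coeff_contract ht, Nat.div_mul_cancel hj]
  · exact (hf j hj).symm

theorem contract_X_pow_of_not_dvd (ht : t ≠ 0) (hk : ¬ t ∣ k) :
    contract t (X ^ k : R[X]) = 0 := by
  ext j
  rw [coeff_contract ht, coeff_X_pow, coeff_zero, if_neg]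
  rintro rfl
  exact hk (Nat.dvd_mul_left t j)

end CommSemiring

section CommRing

variable {R : Type*} [CommRing R] {t k : ℕ}

theorem isUnit_of_isCoprime_C_of_monic {d : R} {g : R[X]} (hg : g.Monic)
    (hdeg : g.natDegree ≠ 0) (h : IsCoprime (C d) g) : IsUnit d := by
  by_contra hd
  let π := Ideal.Quotient.mk (Ideal.span {d})
  have : Nontrivial (R ⧸ Ideal.span {d}) :=
    Ideal.Quotient.nontrivial_iff.mpr (mt Ideal.span_singleton_eq_top.mp hd)
  have hπd : π d = 0 := Ideal.Quotient.eq_zero_iff_mem.mpr (Ideal.mem_span_singleton_self d)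
  have hunit : IsUnit (g.map π) := by
    simpa only [coe_mapRingHom, map_C, hπd, C_0, isCoprime_zero_left] using h.map (mapRingHom π)
  apply hdeg
  rw [← hg.natDegree_map π, (hg.map π).eq_one_of_isUnit hunit, natDegree_one]

theorem isCoprime_C_of_X_pow_sub_one_eq (ht : t ≠ 0) (hk : ¬ t ∣ k) {d : R} {g p q : R[X]}
    (h : X ^ k - 1 = C d * p + q * expand R t g) : IsCoprime (C d) g := by
  have hcontract : contract t p * C d + contract t q * g = -1 := calc
    contract t p * C d + contract t q * g
      = contract t (p * expand R t (C d) + q * expand R t g) := by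
        rw [contract_add ht, contract_mul_expand ht, contract_mul_expand ht]
    _ = contract t (X ^ k + C (-1)) := by
        rw [expand_C, mul_comm p, ← h, C_neg, C_1, sub_eq_add_neg]
    _ = -1 := by
        rw [contract_add ht, contract_X_pow_of_not_dvd ht hk, contract_C, zero_add, C_neg, C_1]
  exact ⟨-contract t p, -contract t q, by linear_combination -hcontract⟩

theorem coeff_X_pow_sub_sum_eq_zero {n : ℕ} (htn : t ∣ n) {s : Fin n → R}
    (hs : ∀ i : Fin n, ¬ t ∣ (i : ℕ) + 1 → s i = 0) {j : ℕ} (hj : ¬ t ∣ j) :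
    (X ^ n - ∑ i : Fin n, C (s i) * X ^ (n - 1 - (i : ℕ))).coeff j = 0 := by
  have hjn : j ≠ n := fun h => hj (h ▸ htn)
  have hterm (i : Fin n) : (C (s i) * X ^ (n - 1 - (i : ℕ))).coeff j = 0 := by
    rw [coeff_C_mul_X_pow]
    split_ifs with hji
    · refine hs i fun hi => hj ?_
      rw [hji, Nat.sub_sub, Nat.add_comm 1]
      exact Nat.dvd_sub htn hi
    · rfl
  rw [coeff_sub, coeff_X_pow, if_neg hjn, finsetSum_coeff,
    Finset.sum_eq_zero fun i _ => hterm i, sub_zero]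

end CommRing

section IntegrallyClosed

variable {R : Type*} [CommRing R] [IsDomain R] [IsIntegrallyClosed R]

theorem coeff_minpoly_eq_zero_iff_of_isFractionRing (F : Type*) {S : Type*} [Field F]
    [Algebra R F] [IsFractionRing R F] [CommRing S] [IsDomain S] [Algebra R S] [Algebra F S]
    [IsScalarTower R F S] {α : S} (hα : IsIntegral R α) {j : ℕ} :
    (minpoly R α).coeff j = 0 ↔ (minpoly F α).coeff j = 0 := by
  rw [minpoly.isIntegrallyClosed_eq_field_fractions' F hα, coeff_map,
    map_eq_zero_iff _ (IsFractionRing.injective R F)]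

theorem isUnit_of_smul_eq_pow_sub_one {S : Type*} [CommRing S] [IsDomain S] [Algebra R S]
    [Module.IsTorsionFree R S] {t k : ℕ} (ht : t ≠ 0) (hk : ¬ t ∣ k) {α : S}
    (hα : IsIntegral R α) (hcoeff : ∀ j, ¬ t ∣ j → (minpoly R α).coeff j = 0)
    {d : R} {β : S} (hβ : β ∈ Algebra.adjoin R {α}) (h : d • β = α ^ k - 1) : IsUnit d := by
  obtain ⟨p, rfl⟩ : ∃ p : R[X], aeval α p = β := by
    rwa [Algebra.adjoin_singleton_eq_range_aeval] at hβ
  set g := contract t (minpoly R α)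
  have hexpand : expand R t g = minpoly R α := expand_contract_of_coeff_eq_zero ht hcoeff
  have hg : g.Monic := by
    rw [← monic_expand_iff (Nat.pos_of_ne_zero ht), hexpand]
    exact minpoly.monic hα
  have hdeg : g.natDegree ≠ 0 := by
    have hpos := minpoly.natDegree_pos hα
    rw [← hexpand, natDegree_expand] at hpos
    exact (Nat.pos_of_mul_pos_right hpos).ne'
  obtain ⟨q, hq⟩ : minpoly R α ∣ X ^ k - 1 - C d * p := by
    refine minpoly.isIntegrallyClosed_dvd hα ?_
    rw [map_sub, map_sub, map_pow, aeval_X, map_one, map_mul, aeval_C, ← Algebra.smul_def, h,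
      sub_self]
  refine isUnit_of_isCoprime_C_of_monic hg hdeg
    (isCoprime_C_of_X_pow_sub_one_eq ht hk (p := p) (q := q) ?_)
  rw [hexpand]
  linear_combination hq

end IntegrallyClosed

theorem dk_eq_one_for_monogenic_general
    (K : Type*) [Field K] [CharZero K] (α : K)
    (n : ℕ) (s : Fin n → ℚ)
    (hmin : minpoly ℚ α = X ^ n - ∑ i : Fin n, C (s i) * X ^ (n - 1 - (i : ℕ)))
    (t : ℕ) (ht2 : 2 ≤ t) (htn : t ∣ n)
    (hs : ∀ i : Fin n, ¬ (t ∣ ((i : ℕ) + 1)) → s i = 0)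
    (hmono : Algebra.adjoin ℤ {α} = integralClosure ℤ K)
    (D : ℕ → ℤ)
    (hD : ∀ k : ℕ, 1 ≤ k →
      IsGreatest {d : ℤ | 0 < d ∧ IsIntegral ℤ ((α ^ k - 1) / (d : K))} (D k)) :
    (∀ k : ℕ, ¬ t ∣ k → D k = 1) ∧ {k : ℕ | 1 ≤ k ∧ D k = D 1}.Infinite := by
  have hpos {k : ℕ} (hk : ¬ t ∣ k) : 1 ≤ k :=
    Nat.pos_of_ne_zero fun h => hk (h ▸ dvd_zero t)
  have hα : IsIntegral ℤ α := by
    rw [← mem_integralClosure_iff, ← hmono]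
    exact Algebra.self_mem_adjoin_singleton ℤ α
  have hcoeff (j : ℕ) (hj : ¬ t ∣ j) : (minpoly ℤ α).coeff j = 0 := by
    rw [coeff_minpoly_eq_zero_iff_of_isFractionRing ℚ hα, hmin]
    exact coeff_X_pow_sub_sum_eq_zero htn hs hj
  have hone (k : ℕ) (hk : ¬ t ∣ k) : D k = 1 := by
    obtain ⟨hDpos, hDint⟩ := (hD k (hpos hk)).1
    have hunit : IsUnit (D k) := by
      refine isUnit_of_smul_eq_pow_sub_one (by omega) hk hα hcoeff (hmono.ge hDint) ?_
      rw [zsmul_eq_mul, mul_div_cancel₀ _ (Int.cast_ne_zero.mpr hDpos.ne')]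
    exact (Int.isUnit_iff.mp hunit).resolve_right (by omega)
  refine ⟨hone, (Nat.frequently_atTop_iff_infinite.mp (Nat.frequently_mod_eq ht2)).mono ?_⟩
  intro k (hkt : k % t = 1)
  have hk : ¬ t ∣ k := by rw [Nat.dvd_iff_mod_eq_zero]; omega
  exact ⟨hpos hk, by rw [hone k hk, hone 1 (Nat.not_dvd_of_pos_of_lt one_pos ht2)]⟩

/-- Proposition 8 (second part). Let `α` be an algebraic integer,
not a root of unity, of degree `n`, with minimal polynomial
`X^n − s₁X^{n−1} − ⋯ − s_n`, `K = ℚ(α)`, `t ∣ n`, `t ≥ 2`, `s_i = 0` whenever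
`t ∤ i`, and `𝒪_K = ℤ[α]`. Then `d_k(α) = 1` for every `k ≥ 1` with
`k ≡ 1 (mod t)`; in particular `{k ≥ 1 : d_k(α) = d₁(α)}` is infinite. -/
theorem dk_eq_one_for_monogenic
    (K : Type*) [Field K] [NumberField K]
    (α : K) (hgen : (ℚ⟮α⟯ : IntermediateField ℚ K) = ⊤)
    (hint : IsIntegral ℤ α) (hnru : ∀ j : ℕ, 0 < j → α ^ j ≠ 1)
    (n : ℕ) (hn : n = Module.finrank ℚ K)
    (s : Fin n → ℚ)
    (hmin : minpoly ℚ α = X ^ n - ∑ i : Fin n, C (s i) * X ^ (n - 1 - (i : ℕ)))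
    (t : ℕ) (ht2 : 2 ≤ t) (htn : t ∣ n)
    (hs : ∀ i : Fin n, ¬ (t ∣ ((i : ℕ) + 1)) → s i = 0)
    (hmono : Algebra.adjoin ℤ {α} = integralClosure ℤ K)
    (D : ℕ → ℤ)
    (hD : ∀ k : ℕ, 1 ≤ k →
      IsGreatest {d : ℤ | 0 < d ∧ IsIntegral ℤ ((α ^ k - 1) / (d : K))} (D k)) :
    (∀ k : ℕ, 1 ≤ k → k % t = 1 → D k = 1) ∧
    {k : ℕ | 1 ≤ k ∧ D k = D 1}.Infinite := by
  have h := dk_eq_one_for_monogenic_general K α n s hmin t ht2 htn hs hmono D hD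
  exact ⟨fun k _ hkt => h.1 k (by rw [Nat.dvd_iff_mod_eq_zero]; omega), h.2⟩
end

section
/- Let α be an algebraic number of degree n over ℚ with minimal polynomial f(X) = X^n − s₁X^{n−1} − ⋯ − s_n, and suppose there is a divisor t of n with t ≥ 2 such that s_i = 0 for every index i (1 ≤ i ≤ n) not divisible by t. For each k ≥ 0 write α^k = y₀(k) + y₁(k)·α + ⋯ + y_{n−1}(k)·α^{n−1} with y_i(k) ∈ ℚ (the coordinates of α^k in the power basis {1, α, …, α^{n−1}} of ℚ(α)). Then y₀(k) = 0 for every integer k ≥ 1 with k ≡ 1 (mod t). -/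
open Polynomial

/-!
Reading `α ^ n = s₁ α ^ (n - 1) + ⋯ + sₙ` modulo `t` in the exponents, every term that occurs has
exponent congruent to `n`. Multiplying by powers of `α` and descending, `α ^ k` is a combination
of those `α ^ i` with `i < n` and `i ≡ k [MOD t]`, and linear independence of the powers below `n`
kills all the other coordinates, among them the constant one as soon as `k` is not divisible by `t`.
-/

theorem coeff_eq_zero_of_sum_smul_mem_span_image {ι R M : Type*} [Fintype ι] [Semiring R]
    [AddCommMonoid M] [Module R M] {v : ι → M} (hv : LinearIndependent R v) {c : ι → R}
    {S : Set ι} (hc : ∑ i, c i • v i ∈ Submodule.span R (v '' S)) {i : ι} (hi : i ∉ S) :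
    c i = 0 := by
  obtain ⟨d, hdS, hd⟩ := (Finsupp.mem_span_image_iff_linearCombination R).1 hc
  have hcd : c = d := hv.fintypeLinearCombination_injective <| by
    rw [Fintype.linearCombination_apply, Fintype.linearCombination_apply, ← hd,
      Finsupp.linearCombination_apply, Finsupp.sum_fintype _ _ fun i => zero_smul R (v i)]
  rw [hcd]
  exact Finsupp.notMem_support_iff.1 fun hid => hi (hdS hid)

section Recurrence

variable {R A : Type*} [CommSemiring R] [Semiring A] [Algebra R A] {α : A} {n : ℕ} {s : Fin n → R}

theorem pow_eq_sum_smul_pow_of_le (hα : α ^ n = ∑ j : Fin n, s j • α ^ (n - 1 - (j : ℕ)))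
    {k : ℕ} (hk : n ≤ k) : α ^ k = ∑ j : Fin n, s j • α ^ (k - 1 - (j : ℕ)) := by
  calc α ^ k = α ^ (k - n) * α ^ n := by rw [← pow_add, Nat.sub_add_cancel hk]
    _ = ∑ j : Fin n, s j • α ^ (k - 1 - (j : ℕ)) := by
      rw [hα, Finset.mul_sum]
      refine Finset.sum_congr rfl fun j _ => ?_
      rw [mul_smul_comm, ← pow_add]
      congr 2
      omega

theorem pow_mem_span_pow_modEq (hα : α ^ n = ∑ j : Fin n, s j • α ^ (n - 1 - (j : ℕ)))
    {t : ℕ} (hs : ∀ j : Fin n, ¬ t ∣ (j : ℕ) + 1 → s j = 0) (k : ℕ) :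
    α ^ k ∈ Submodule.span R
      ((fun i : Fin n => α ^ (i : ℕ)) '' {i | (i : ℕ) ≡ k [MOD t]}) := by
  induction k using Nat.strong_induction_on with
  | _ k ih =>
    obtain hkn | hnk := lt_or_ge k n
    · exact Submodule.subset_span ⟨⟨k, hkn⟩, Nat.ModEq.refl k, rfl⟩
    · rw [pow_eq_sum_smul_pow_of_le hα hnk]
      refine Submodule.sum_mem _ fun j _ => ?_
      by_cases hj : t ∣ (j : ℕ) + 1
      · have hmod : k - 1 - (j : ℕ) ≡ k [MOD t] := by
          rw [Nat.modEq_iff_dvd' (by omega)]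
          convert hj using 1
          omega
        refine Submodule.smul_mem _ _ (Submodule.span_mono ?_ (ih (k - 1 - (j : ℕ)) (by omega)))
        exact Set.image_mono fun i hi => Nat.ModEq.trans hi hmod
      · rw [hs j hj, zero_smul]
        exact Submodule.zero_mem _

end Recurrence

section Minpoly

theorem natDegree_X_pow_sub_sum_fin {R : Type*} [Ring R] [Nontrivial R] {n : ℕ} (s : Fin n → R) :
    (X ^ n - ∑ j : Fin n, C (s j) * X ^ (n - 1 - (j : ℕ))).natDegree = n := by
  have hrev : ∑ j : Fin n, C (s j) * X ^ (n - 1 - (j : ℕ)) =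
      ∑ j : Fin n, C (s j.rev) * X ^ (j : ℕ) :=
    Fintype.sum_equiv Fin.revPerm _ _ fun j => by
      simp [Nat.sub_sub, Nat.add_comm]
  have hlt := degree_sum_fin_lt fun j => s j.rev
  rw [hrev, natDegree_eq_of_degree_eq (degree_sub_eq_left_of_degree_lt _), natDegree_X_pow]
  rwa [degree_X_pow]

variable {F A : Type*} [Field F] [Ring A] [Algebra F A] {α : A} {n : ℕ} {s : Fin n → F}

theorem linearIndependent_pow_of_minpoly_eq
    (hmin : minpoly F α = X ^ n - ∑ j : Fin n, C (s j) * X ^ (n - 1 - (j : ℕ))) :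
    LinearIndependent F fun i : Fin n => α ^ (i : ℕ) := by
  have hdeg : (minpoly F α).natDegree = n := hmin ▸ natDegree_X_pow_sub_sum_fin s
  exact hdeg ▸ linearIndependent_pow α

theorem pow_eq_sum_smul_pow_of_minpoly_eq
    (hmin : minpoly F α = X ^ n - ∑ j : Fin n, C (s j) * X ^ (n - 1 - (j : ℕ))) :
    α ^ n = ∑ j : Fin n, s j • α ^ (n - 1 - (j : ℕ)) := by
  have hroot := minpoly.aeval F α
  simp only [hmin, map_sub, map_sum, map_mul, map_pow, aeval_X, aeval_C,
    ← Algebra.smul_def] at hroot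
  exact sub_eq_zero.1 hroot

theorem power_basis_constant_coordinate_vanishes_general
    (hmin : minpoly F α = X ^ n - ∑ j : Fin n, C (s j) * X ^ (n - 1 - (j : ℕ)))
    {t : ℕ} (hs : ∀ j : Fin n, ¬ t ∣ (j : ℕ) + 1 → s j = 0) {k : ℕ} {y : Fin n → F}
    (hy : α ^ k = ∑ i : Fin n, y i • α ^ (i : ℕ)) {i : Fin n} (hi : ¬ (i : ℕ) ≡ k [MOD t]) :
    y i = 0 := by
  have hmem := pow_mem_span_pow_modEq (pow_eq_sum_smul_pow_of_minpoly_eq hmin) hs k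
  rw [hy] at hmem
  exact coeff_eq_zero_of_sum_smul_mem_span_image (linearIndependent_pow_of_minpoly_eq hmin) hmem hi

end Minpoly

/-- Let `α` be an algebraic number of degree `n` with minimal
polynomial `X^n − s₁X^{n−1} − ⋯ − s_n`, and suppose `t ∣ n`, `t ≥ 2`, and
`s_i = 0` for every `i` not divisible by `t`. Writing
`α^k = y₀(k) + y₁(k)α + ⋯ + y_{n−1}(k)α^{n−1}` in the power basis, we have
`y₀(k) = 0` for every `k ≥ 1` with `k ≡ 1 (mod t)`. -/
theorem power_basis_constant_coordinate_vanishes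
    (K : Type*) [Field K] [Algebra ℚ K]
    (α : K) (n : ℕ) (s : Fin n → ℚ)
    (hmin : minpoly ℚ α = X ^ n - ∑ i : Fin n, C (s i) * X ^ (n - 1 - (i : ℕ)))
    (t : ℕ) (ht2 : 2 ≤ t) (htn : t ∣ n)
    (hs : ∀ i : Fin n, ¬ (t ∣ ((i : ℕ) + 1)) → s i = 0)
    (y : Fin n → ℕ → ℚ)
    (hy : ∀ k : ℕ, α ^ k = ∑ i : Fin n, algebraMap ℚ K (y i k) * α ^ (i : ℕ)) :
    ∀ k : ℕ, 1 ≤ k → k % t = 1 → ∀ i : Fin n, (i : ℕ) = 0 → y i k = 0 := by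
  intro k _ hk i hi
  have hik : ¬ (i : ℕ) ≡ k [MOD t] := by simp [Nat.ModEq, hi, hk]
  exact power_basis_constant_coordinate_vanishes_general hmin hs
    (by simpa only [Algebra.smul_def] using hy k) hik
end

section
/- Let T be a nonzero integer and let u be the Lucas sequence with parameters (T, 1). Then for all integers n, m ≥ 0, the integer u(n+1) + u(n) divides u(N+1) + u(N), where N = 2nm + n + m (so that 2N + 1 = (2n+1)(2m+1)). -/
/-!
Write `v n = u (n + 1) + q * u n`, where `u` is the Lucas sequence with parameters `(P, q ^ 2)`.
The addition formula `w (a + b + 1) = w (a + 1) * u (b + 1) - Q * (w a * u b)` holds for every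
solution `w` of the recurrence. Taking `w = u` and `a = b = n`, it gives
`u (2 * n + 1) = u (n + 1) ^ 2 - (q * u n) ^ 2`, a multiple of `v n`. Taking `w = v`, it shows that
divisibility of `v k` by a divisor of `u p` is preserved when `k` increases by `p`. Starting from
`k = n` and moving `m` times by `p = 2 * n + 1` reaches `N = n + (2 * n + 1) * m`.
-/

section LucasSequence

variable {R : Type*} [CommRing R]

/-- `w` is a solution, with arbitrary initial values, of the second-order recurrence that defines
the Lucas sequence with parameters `(P, Q)`. -/
def IsLucasRecurrent (P Q : R) (w : ℕ → R) : Prop :=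
  ∀ k, w (k + 2) = P * w (k + 1) - Q * w k

/-- `u` is the Lucas sequence with parameters `(P, Q)`, characterised by its recurrence and its
initial values, over an arbitrary commutative ring. -/
structure IsLucasSequence_s16 (P Q : R) (u : ℕ → R) : Prop where
  zero : u 0 = 0
  one : u 1 = 1
  recurrent : IsLucasRecurrent P Q u

variable {P Q : R} {u w : ℕ → R}

theorem IsLucasRecurrent.succ_add_const_mul (hw : IsLucasRecurrent P Q w) (c : R) :
    IsLucasRecurrent P Q fun k ↦ w (k + 1) + c * w k := by
  intro k
  linear_combination hw (k + 1) + c * hw k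

namespace IsLucasSequence_s16

theorem apply_add_add_one (hu : IsLucasSequence_s16 P Q u) (hw : IsLucasRecurrent P Q w) (a b : ℕ) :
    w (a + b + 1) = w (a + 1) * u (b + 1) - Q * (w a * u b) := by
  induction b generalizing a with
  | zero => simp [hu.zero, hu.one]
  | succ b ih =>
    calc w (a + (b + 1) + 1)
      _ = w (a + 1 + b + 1) := by congr 1; ring
      _ = w (a + 2) * u (b + 1) - Q * (w (a + 1) * u b) := ih (a + 1)
      _ = w (a + 1) * u (b + 2) - Q * (w a * u (b + 1)) := by
        linear_combination u (b + 1) * hw a - w (a + 1) * hu.recurrent b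

theorem apply_two_mul_add_one (hu : IsLucasSequence_s16 P Q u) (n : ℕ) :
    u (2 * n + 1) = u (n + 1) ^ 2 - Q * u n ^ 2 := by
  rw [two_mul, hu.apply_add_add_one hu.recurrent, sq, sq]

theorem dvd_apply_add (hu : IsLucasSequence_s16 P Q u) (hw : IsLucasRecurrent P Q w) {d : R}
    {k p : ℕ} (hp : d ∣ u p) (hk : d ∣ w k) : d ∣ w (k + p) := by
  cases p with
  | zero => exact hk
  | succ b =>
    rw [← add_assoc, hu.apply_add_add_one hw]
    exact dvd_sub (hp.mul_left _) ((hk.mul_right _).mul_left _)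

theorem dvd_apply_add_mul (hu : IsLucasSequence_s16 P Q u) (hw : IsLucasRecurrent P Q w) {d : R}
    {k p : ℕ} (hp : d ∣ u p) (hk : d ∣ w k) (m : ℕ) : d ∣ w (k + p * m) := by
  induction m with
  | zero => exact hk
  | succ m ih =>
    rw [mul_add_one, ← add_assoc]
    exact hu.dvd_apply_add hw hp ih

theorem succ_add_mul_dvd_apply_two_mul_add_one {q : R} (hu : IsLucasSequence_s16 P (q ^ 2) u) (n : ℕ) :
    u (n + 1) + q * u n ∣ u (2 * n + 1) := by
  rw [hu.apply_two_mul_add_one, ← mul_pow]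
  exact Dvd.intro _ (sq_sub_sq _ _).symm

end IsLucasSequence_s16

theorem lucas_odd_index_divisibility_general {q : R} (hu : IsLucasSequence_s16 P (q ^ 2) u) (n m : ℕ) :
    u (n + 1) + q * u n ∣ u (2 * n * m + n + m + 1) + q * u (2 * n * m + n + m) := by
  have index_eq : 2 * n * m + n + m = n + (2 * n + 1) * m := by ring
  rw [index_eq]
  exact hu.dvd_apply_add_mul (hu.recurrent.succ_add_const_mul q)
    (hu.succ_add_mul_dvd_apply_two_mul_add_one n) dvd_rfl m

end LucasSequence

/-- For the Lucas sequence `u` with parameters `(T, 1)` and any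
`n, m ≥ 0`, the integer `u(n+1) + u(n)` divides `u(N+1) + u(N)` where
`N = 2nm + n + m`. -/
theorem lucas_odd_index_divisibility
    (T : ℤ) (hT : T ≠ 0)
    (u : ℕ → ℤ) (hu0 : u 0 = 0) (hu1 : u 1 = 1)
    (hurec : ∀ k : ℕ, u (k + 2) = T * u (k + 1) - 1 * u k) :
    ∀ n m : ℕ,
      u (n + 1) + u n ∣ u (2 * n * m + n + m + 1) + u (2 * n * m + n + m) := by
  have hu : IsLucasSequence_s16 T (1 ^ 2) u := ⟨hu0, hu1, by rwa [one_pow]⟩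
  simpa only [one_mul] using lucas_odd_index_divisibility_general hu
end
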